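/- arXiv:1206.4586 — 6 statements merged into one kernel-verified Lean document; each statement's English description precedes it below -/
import Mathlib

section
/- Let ν be a probability measure on [0,1] and n ≥ 1. Let G_n be the random graph of Construction 2 on {1,…,n}, and let H_n = G(n,W) be the random graph defined by the kernel W on the probability space ([0,1]², μ_ν). Let π be a uniformly random permutation of {1,…,n}, independent of all randomness used to build G_n. Then the relabelled graph π·G_n (which has edge {π(i),π(j)} if and only if G_n has edge {i,j}) has the same distribution as H_n; in particular G_n and G(n,W) are equal in distribution as unlabelled graphs. -/
open MeasureTheory ProbabilityTheory Filter
open scoped ENNReal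

/-- Lebesgue measure on `[0,1]`, as a (probability) measure on `ℝ`. -/
noncomputable def unif01 : Measure ℝ := volume.restrict (Set.Icc (0 : ℝ) 1)

/-- The kernel `W` on `S = [0,1]²`:
`W((s₁,t₁),(s₂,t₂)) = s₂` if `t₁ < t₂`, `s₁` if `t₁ > t₂`, and `0` if `t₁ = t₂`. -/
noncomputable def Wker : ℝ × ℝ → ℝ × ℝ → ℝ := fun x y =>
  if x.2 < y.2 then y.1 else if y.2 < x.2 then x.1 else 0

/-- Sample space measure for Construction 2 on `n` vertices:
`θ₁,…,θ_n` i.i.d. with law `ν` and `(U_{ij})` i.i.d. `Uniform[0,1]`, all independent. -/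
noncomputable def con2Measure (n : ℕ) (ν : Measure ℝ) :
    Measure ((Fin n → ℝ) × (Fin n × Fin n → ℝ)) :=
  (Measure.pi fun _ => ν).prod (Measure.pi fun _ => unif01)

/-- Edge indicator of the Construction 2 graph `G_n`: for `i < j`,
the edge `{i,j}` is present iff `U_{ij} < θ_j`. -/
noncomputable def con2Edge (n : ℕ) (ω : (Fin n → ℝ) × (Fin n × Fin n → ℝ))
    (i j : Fin n) : Bool :=
  decide ((i < j ∧ ω.2 (i, j) < ω.1 j) ∨ (j < i ∧ ω.2 (j, i) < ω.1 i))

/-- Sample space measure for the random graph `G(n,W)` on the kernel `W` over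
`(S, μ_ν) = ([0,1]², ν × λ)`: `X₁,…,X_n` i.i.d. with law `μ_ν` and `(V_{ij})`
i.i.d. `Uniform[0,1]`, all independent. -/
noncomputable def kerMeasure (n : ℕ) (ν : Measure ℝ) :
    Measure ((Fin n → ℝ × ℝ) × (Fin n × Fin n → ℝ)) :=
  (Measure.pi fun _ => ν.prod unif01).prod (Measure.pi fun _ => unif01)

/-- Edge indicator of `G(n,W)`: for `i < j`, the edge `{i,j}` is present iff
`V_{ij} < W(X_i, X_j)`. -/
noncomputable def kerEdge (n : ℕ) (ω : (Fin n → ℝ × ℝ) × (Fin n × Fin n → ℝ))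
    (i j : Fin n) : Bool :=
  decide ((i < j ∧ ω.2 (i, j) < Wker (ω.1 i) (ω.1 j)) ∨
    (j < i ∧ ω.2 (j, i) < Wker (ω.1 j) (ω.1 i)))

instance (n : ℕ) : MeasurableSpace (Equiv.Perm (Fin n)) := ⊤

/-- The uniform distribution on the permutations of `{1,…,n}`. -/
noncomputable def permUniform (n : ℕ) : Measure (Equiv.Perm (Fin n)) :=
  (PMF.uniformOfFintype (Equiv.Perm (Fin n))).toMeasure

instance : IsProbabilityMeasure unif01 := ⟨by simp [unif01]⟩

instance (n : ℕ) : IsProbabilityMeasure (permUniform n) := by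
  unfold permUniform; infer_instance

instance (n : ℕ) : MeasurableSingletonClass (Equiv.Perm (Fin n)) := ⟨fun _ => trivial⟩

lemma mp_reindex {ι : Type*} [Fintype ι] (m : Measure ℝ) [SigmaFinite m] (e : Equiv.Perm ι) :
    MeasurePreserving (fun (v : ι → ℝ) i => v (e i)) (Measure.pi fun _ => m)
      (Measure.pi fun _ => m) :=
  (measurePreserving_piCongrLeft (α := fun _ : ι => ℝ) (fun _ => m) e).symm

lemma ae_inj (n : ℕ) : ∀ᵐ t ∂(Measure.pi fun _ : Fin n => unif01), Function.Injective t := by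
  have h : ∀ i j : Fin n, i ≠ j → ∀ᵐ t ∂(Measure.pi fun _ : Fin n => unif01), t i ≠ t j := by
    intro i j hij
    unfold unif01
    rw [← Measure.restrict_pi_pi]
    apply ae_restrict_of_ae
    let p : Submodule ℝ (Fin n → ℝ) :=
      LinearMap.ker (LinearMap.proj (R := ℝ) (φ := fun _ : Fin n => ℝ) i - LinearMap.proj j)
    have hp : p ≠ ⊤ := by
      intro h
      have : Pi.single i (1 : ℝ) ∈ p := by rw [h]; trivial
      simp [p, hij.symm] at this
    have := Measure.addHaar_submodule (volume : Measure (Fin n → ℝ)) p hp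
    rw [← volume_pi, ae_iff]
    convert this using 2
    ext t
    simp [p, sub_eq_zero]
  have h2 : ∀ᵐ t ∂(Measure.pi fun _ : Fin n => unif01), ∀ i j : Fin n, i ≠ j → t i ≠ t j := by
    rw [ae_all_iff]; intro i
    rw [ae_all_iff]; intro j
    by_cases hij : i = j
    · simp [hij]
    · filter_upwards [h i j hij] with t ht _ using ht
  filter_upwards [h2] with t ht i j hij
  by_contra hne
  exact ht i j hne hij

lemma measurable_sort (n : ℕ) : Measurable (fun t : Fin n → ℝ => Tuple.sort t) := by
  refine measurable_to_countable' fun σ => ?_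
  have : (fun t : Fin n → ℝ => Tuple.sort t) ⁻¹' {σ} =
      {t | (∀ i j, i ≤ j → t (σ i) ≤ t (σ j)) ∧
        ∀ i j, i < j → t (σ i) = t (σ j) → σ i < σ j} := by
    ext t
    simp only [Set.mem_preimage, Set.mem_singleton_iff, Set.mem_setOf_eq]
    rw [eq_comm, Tuple.eq_sort_iff]
    rfl
  rw [this]
  apply measurableSet_setOf.2
  refine Measurable.and ?_ ?_
  · refine Measurable.forall fun i => Measurable.forall fun j => Measurable.imp measurable_const ?_
    exact measurableSet_setOf.1 (measurableSet_le (measurable_pi_apply _) (measurable_pi_apply _))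
  · refine Measurable.forall fun i => Measurable.forall fun j => Measurable.imp measurable_const ?_
    refine Measurable.imp ?_ measurable_const
    exact measurableSet_setOf.1
      (measurableSet_eq_fun (measurable_pi_apply _) (measurable_pi_apply _))

lemma mp_sort (n : ℕ) :
    MeasurePreserving (fun t : Fin n → ℝ => Tuple.sort t) (Measure.pi fun _ => unif01)
      (permUniform n) := by
  refine ⟨measurable_sort n, ?_⟩
  set m := Measure.map (fun t : Fin n → ℝ => Tuple.sort t) (Measure.pi fun _ => unif01) with hm
  have : IsProbabilityMeasure m := Measure.isProbabilityMeasure_map (measurable_sort n).aemeasurable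
  have key : ∀ σ : Equiv.Perm (Fin n), m {σ} = m {1} := by
    intro σ
    rw [hm, Measure.map_apply (measurable_sort n) (measurableSet_singleton _),
      Measure.map_apply (measurable_sort n) (measurableSet_singleton _),
      ← (mp_reindex unif01 σ).measure_preimage
        ((measurable_sort n) (measurableSet_singleton (1 : Equiv.Perm (Fin n)))).nullMeasurableSet]
    apply measure_congr
    filter_upwards [ae_inj n] with t ht
    apply propext
    change Tuple.sort t = σ ↔ Tuple.sort (t ∘ σ) = 1
    have h1 := Tuple.comp_perm_comp_sort_eq_comp_sort (f := t) (σ := σ)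
    have h2 : ∀ i, σ (Tuple.sort (t ∘ σ) i) = Tuple.sort t i := fun i => ht (congrFun h1 i)
    constructor
    · intro h
      ext i
      have := h2 i
      rw [h] at this
      simp [σ.injective this]
    · intro h
      ext i
      rw [← h2 i, h]; rfl
  have hsum : ∑ σ : Equiv.Perm (Fin n), m {σ} = 1 := by
    rw [sum_measure_singleton]; simp
  simp only [key, Finset.sum_const, Finset.card_univ, nsmul_eq_mul] at hsum
  refine Measure.ext_of_singleton fun σ => ?_
  rw [key, permUniform, PMF.toMeasure_apply_singleton _ _ (measurableSet_singleton _),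
    PMF.uniformOfFintype_apply]
  exact ENNReal.eq_inv_of_mul_eq_one_left (by rw [mul_comm]; exact hsum)

def pairFun {n : ℕ} (σ : Equiv.Perm (Fin n)) (p : Fin n × Fin n) : Fin n × Fin n :=
  if (p.1 < p.2 ↔ σ p.1 < σ p.2) then (σ p.1, σ p.2) else (σ p.2, σ p.1)

lemma pairFun_inv {n : ℕ} (σ τ : Equiv.Perm (Fin n)) (h : ∀ i, τ (σ i) = i) (p : Fin n × Fin n) :
    pairFun τ (pairFun σ p) = p := by
  obtain ⟨i, j⟩ := p
  have hinj : σ i = σ j ↔ i = j := σ.injective.eq_iff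
  by_cases h1 : (i < j ↔ σ i < σ j)
  · simp [pairFun, h1, h]
  · have h2 : ¬ (σ j < σ i ↔ j < i) := by
      rcases lt_trichotomy i j with h3 | h3 | h3 <;>
      rcases lt_trichotomy (σ i) (σ j) with h4 | h4 | h4 <;> grind
    simp [pairFun, h1, h, h2]

def pairEquiv {n : ℕ} (σ : Equiv.Perm (Fin n)) : Equiv.Perm (Fin n × Fin n) where
  toFun := pairFun σ
  invFun := pairFun σ.symm
  left_inv := pairFun_inv _ _ (by simp)
  right_inv := pairFun_inv _ _ (by simp)

def shuf {n : ℕ} (σ : Equiv.Perm (Fin n)) (ω : (Fin n → ℝ) × (Fin n × Fin n → ℝ)) :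
    (Fin n → ℝ) × (Fin n × Fin n → ℝ) :=
  (fun i => ω.1 (σ i), fun p => ω.2 (pairEquiv σ p))

lemma mp_shuf {n : ℕ} (ν : Measure ℝ) [IsProbabilityMeasure ν] (σ : Equiv.Perm (Fin n)) :
    MeasurePreserving (shuf σ) (con2Measure n ν) (con2Measure n ν) :=
  (mp_reindex ν σ).prod (mp_reindex unif01 (pairEquiv σ))

noncomputable def bigT {n : ℕ} (ω : (Fin n → ℝ × ℝ) × (Fin n × Fin n → ℝ)) :
    Equiv.Perm (Fin n) × ((Fin n → ℝ) × (Fin n × Fin n → ℝ)) :=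
  (Tuple.sort (fun i => (ω.1 i).2),
    shuf (Tuple.sort (fun i => (ω.1 i).2)) (fun i => (ω.1 i).1, ω.2))

lemma mp_split (n : ℕ) (ν : Measure ℝ) [IsProbabilityMeasure ν] :
    MeasurePreserving (fun ω : (Fin n → ℝ × ℝ) × (Fin n × Fin n → ℝ) =>
        ((fun i => (ω.1 i).2 : Fin n → ℝ), ((fun i => (ω.1 i).1 : Fin n → ℝ), ω.2)))
      (kerMeasure n ν) ((Measure.pi fun _ => unif01).prod (con2Measure n ν)) := by
  have h1 := measurePreserving_arrowProdEquivProdArrow ℝ ℝ (Fin n) (fun _ => ν) (fun _ => unif01)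
  have h2 := (Measure.measurePreserving_swap
    (μ := Measure.pi fun _ : Fin n => ν) (ν := Measure.pi fun _ : Fin n => unif01)).comp h1
  have h3 := h2.prod (MeasurePreserving.id (Measure.pi fun _ : Fin n × Fin n => unif01))
  have h4 := (measurePreserving_prodAssoc (Measure.pi fun _ : Fin n => unif01)
    (Measure.pi fun _ : Fin n => ν) (Measure.pi fun _ : Fin n × Fin n => unif01)).comp h3
  exact h4

instance (n : ℕ) (ν : Measure ℝ) [IsProbabilityMeasure ν] :
    IsProbabilityMeasure (con2Measure n ν) := by
  unfold con2Measure; infer_instance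

lemma mp_bigT (n : ℕ) (ν : Measure ℝ) [IsProbabilityMeasure ν] :
    MeasurePreserving (bigT (n := n)) (kerMeasure n ν)
      ((permUniform n).prod (con2Measure n ν)) := by
  have h1 := ((mp_sort n).prod (MeasurePreserving.id (con2Measure n ν))).comp (mp_split n ν)
  have h2 := (MeasurePreserving.id (permUniform n)).skew_product (μc := con2Measure n ν)
    (μd := con2Measure n ν) (g := fun σ => shuf σ)
    (measurable_from_prod_countable_right fun σ => (mp_shuf ν σ).measurable)
    (ae_of_all _ fun σ => (mp_shuf ν σ).map_eq)
  exact h2.comp h1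

lemma measurable_con2 (n : ℕ) : Measurable
    (fun ω : Equiv.Perm (Fin n) × ((Fin n → ℝ) × (Fin n × Fin n → ℝ)) =>
          fun a b : Fin n => con2Edge n ω.2 (ω.1.symm a) (ω.1.symm b)) := by
  refine measurable_from_prod_countable_right fun σ => ?_
  refine measurable_pi_iff.2 fun a => measurable_pi_iff.2 fun b => ?_
  apply measurable_to_bool
  simp only [con2Edge, Set.preimage, Set.mem_singleton_iff, decide_eq_true_eq]
  apply measurableSet_setOf.2
  refine Measurable.or ?_ ?_ <;> refine Measurable.and measurable_const ?_ <;>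
  exact measurableSet_setOf.1 (measurableSet_lt (by fun_prop) (by fun_prop))

lemma edge_eq (n : ℕ) (ω : (Fin n → ℝ × ℝ) × (Fin n × Fin n → ℝ))
    (hω : Function.Injective (fun i => (ω.1 i).2)) (a b : Fin n) :
    con2Edge n (bigT ω).2 ((bigT ω).1.symm a) ((bigT ω).1.symm b) = kerEdge n ω a b := by
  obtain ⟨X, V⟩ := ω
  set t : Fin n → ℝ := fun i => (X i).2 with ht
  set σ := Tuple.sort t with hσ
  have hmono : StrictMono (t ∘ σ) :=
    (Tuple.monotone_sort t).strictMono_of_injective (hω.comp σ.injective)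
  have hlt : ∀ i j, i < j ↔ (X (σ i)).2 < (X (σ j)).2 := fun i j => hmono.lt_iff_lt.symm
  obtain ⟨i, rfl⟩ := σ.surjective a
  obtain ⟨j, rfl⟩ := σ.surjective b
  change con2Edge n (shuf σ (fun i => (X i).1, V)) (σ.symm (σ i)) (σ.symm (σ j)) = _
  rw [σ.symm_apply_apply, σ.symm_apply_apply]
  have hinj : σ i = σ j ↔ i = j := σ.injective.eq_iff
  have hij := hlt i j
  have hji := hlt j i
  simp only [con2Edge, kerEdge, shuf, pairEquiv, pairFun, Wker, Equiv.coe_fn_mk]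
  rw [decide_eq_decide]
  rcases lt_trichotomy i j with h3 | h3 | h3 <;>
  rcases lt_trichotomy (σ i) (σ j) with h4 | h4 | h4 <;> grind

/-- Let `ν` be a probability measure on `[0,1]` and `n ≥ 1`. If `π` is a
uniformly random permutation of `{1,…,n}`, independent of the randomness building the
Construction 2 graph `G_n`, then the relabelled graph `π·G_n` (with edge `{π i, π j}` iff
`G_n` has edge `{i,j}`, i.e. edge `{a,b}` iff `G_n` has edge `{π⁻¹ a, π⁻¹ b}`) has the same
distribution as `G(n,W)`; in particular `G_n` and `G(n,W)` are equal in distribution as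
unlabelled graphs. -/
theorem stmt0 (ν : Measure ℝ) [IsProbabilityMeasure ν] (hν : ν (Set.Icc 0 1) = 1)
    (n : ℕ) (hn : 1 ≤ n) :
    Measure.map
        (fun ω : Equiv.Perm (Fin n) × ((Fin n → ℝ) × (Fin n × Fin n → ℝ)) =>
          fun a b : Fin n => con2Edge n ω.2 (ω.1.symm a) (ω.1.symm b))
        ((permUniform n).prod (con2Measure n ν))
      = Measure.map (fun ω => fun a b : Fin n => kerEdge n ω a b) (kerMeasure n ν) := by
  rw [← (mp_bigT n ν).map_eq, Measure.map_map (measurable_con2 n) (mp_bigT n ν).measurable]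
  apply Measure.map_congr
  have hsp : ∀ᵐ ω ∂(kerMeasure n ν), Function.Injective (fun i => (ω.1 i).2) :=
    (mp_split n ν).quasiMeasurePreserving.ae
      (Measure.quasiMeasurePreserving_fst.ae (ae_inj n))
  filter_upwards [hsp] with ω hω
  funext a b
  exact edge_eq n ω hω a b
end

section
/- Let ν be a probability measure on [0,1], and for each n ≥ 1 let D_n be a random variable with the mixed binomial distribution P(D_n = k) = C(n−1,k) ∫₀¹ θ^k (1−θ)^{n−1−k} dν(θ) for 0 ≤ k ≤ n−1. Then D_n/n converges in distribution to ν as n → ∞, i.e. the law of D_n/n converges weakly to ν. -/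
open MeasureTheory Filter
open scoped ENNReal

/-- The law of `D_n / n`, where `D_n` has the mixed binomial distribution
`P(D_n = k) = C(n−1,k) ∫₀¹ θ^k (1−θ)^{n−1−k} dν(θ)`, `0 ≤ k ≤ n−1`. -/
noncomputable def lawDnDivN (ν : Measure ℝ) (n : ℕ) : Measure ℝ :=
  ∑ k ∈ Finset.range n,
    ENNReal.ofReal (((n - 1).choose k : ℝ) * ∫ θ, θ ^ k * (1 - θ) ^ (n - 1 - k) ∂ν) •
      Measure.dirac ((k : ℝ) / n)

lemma aux_pointwise (f : ℝ → ℝ) (hf : Continuous f) (x : unitInterval) :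
    Tendsto (fun n : ℕ => ∑ k ∈ Finset.range (n + 1),
      ((n.choose k : ℝ) * ((x : ℝ) ^ k * (1 - (x : ℝ)) ^ (n - k))) * f ((k : ℝ) / ((n + 1 : ℕ) : ℝ)))
      atTop (nhds (f x)) := by
  let F : C(unitInterval, ℝ) := ⟨fun y => f y, by fun_prop⟩
  have h1 : Tendsto (fun n : ℕ => bernsteinApproximation n F x) atTop (nhds (f x)) :=
    ((continuous_eval_const x : Continuous fun G : C(unitInterval, ℝ) => G x).tendsto F).comp (bernsteinApproximation_uniform F)
  have hu : UniformContinuous F := CompactSpace.uniformContinuous_of_continuous F.continuous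
  refine tendsto_of_tendsto_of_dist h1 ?_
  rw [Metric.tendsto_atTop]
  intro ε hε
  obtain ⟨δ, hδ, hd⟩ := Metric.uniformContinuous_iff.1 hu (ε / 2) (half_pos hε)
  obtain ⟨N, hN⟩ := exists_nat_one_div_lt hδ
  refine ⟨max N 1, fun n hn => ?_⟩
  have hn1 : 1 ≤ n := le_trans (le_max_right _ _) hn
  have hnN : N ≤ n := le_trans (le_max_left _ _) hn
  have hnpos : (0 : ℝ) < n := by exact_mod_cast hn1
  rw [Real.dist_0_eq_abs, abs_of_nonneg dist_nonneg, bernsteinApproximation.apply,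
    Finset.sum_range, Real.dist_eq, ← Finset.sum_sub_distrib]
  have key : ∀ k : Fin (n + 1), |bernstein n k x • F (bernstein.z k) -
      ((n.choose k : ℝ) * ((x : ℝ) ^ (k : ℕ) * (1 - (x : ℝ)) ^ (n - (k : ℕ))))
        * f ((k : ℝ) / ((n + 1 : ℕ) : ℝ))| ≤ bernstein n k x * (ε / 2) := by
    intro k
    have hk : (k : ℝ) ≤ n := by exact_mod_cast k.is_le
    have hk0 : (0 : ℝ) ≤ (k : ℕ) := by positivity
    have hmem : (k : ℝ) / ((n + 1 : ℕ) : ℝ) ∈ unitInterval := by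
      constructor
      · positivity
      · rw [div_le_one (by positivity)]; push_cast; linarith
    have hdist : dist (bernstein.z k) (⟨_, hmem⟩ : unitInterval) < δ := by
      refine lt_of_le_of_lt ?_ hN
      rw [Subtype.dist_eq, Real.dist_eq]
      have e : ((bernstein.z k : unitInterval) : ℝ) - (k : ℝ) / ((n + 1 : ℕ) : ℝ)
          = ((k : ℝ) / n) * (1 / ((n : ℝ) + 1)) := by
        simp only [bernstein.z]
        push_cast
        field_simp
        ring
      change |((bernstein.z k : unitInterval) : ℝ) - (k : ℝ) / ((n + 1 : ℕ) : ℝ)| ≤ _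
      rw [e, abs_of_nonneg (by positivity)]
      have a1 : (k : ℝ) / n ≤ 1 := (div_le_one hnpos).2 hk
      have a2 : 1 / ((n : ℝ) + 1) ≤ 1 / ((N : ℝ) + 1) := by gcongr
      have a3 : 0 ≤ 1 / ((n : ℝ) + 1) := by positivity
      nlinarith
    have h := hd hdist
    rw [← mul_assoc, ← bernstein_apply, smul_eq_mul, ← mul_sub, abs_mul,
      abs_of_nonneg bernstein_nonneg]
    exact mul_le_mul_of_nonneg_left h.le bernstein_nonneg
  calc _ ≤ ∑ k : Fin (n + 1), bernstein n k x * (ε / 2) :=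
        (Finset.abs_sum_le_sum_abs _ _).trans (Finset.sum_le_sum fun k _ => key k)
    _ = ε / 2 := by rw [← Finset.sum_mul, bernstein.probability, one_mul]
    _ < ε := half_lt_self hε

/-- Let `ν` be a probability measure on `[0,1]` and let `D_n` have the mixed
binomial distribution `P(D_n = k) = C(n−1,k) ∫₀¹ θ^k (1−θ)^{n−1−k} dν(θ)` for `0 ≤ k ≤ n−1`.
Then `D_n/n` converges in distribution to `ν` as `n → ∞`: the law of `D_n/n` converges weakly
to `ν`, i.e. integrals of bounded continuous functions converge. -/
theorem stmt2 (ν : Measure ℝ) [IsProbabilityMeasure ν] (hν : ν (Set.Icc 0 1) = 1) :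
    ∀ f : BoundedContinuousFunction ℝ ℝ,
      Tendsto (fun n => ∫ x, f x ∂(lawDnDivN ν n)) atTop (nhds (∫ x, f x ∂ν)) := by
  intro f
  have hae : ∀ᵐ θ ∂ν, θ ∈ Set.Icc (0 : ℝ) 1 := by
    refine (mem_ae_iff_prob_eq_one measurableSet_Icc).2 ?_
    exact hν
  have hint : ∀ k m : ℕ, Integrable (fun θ : ℝ => θ ^ k * (1 - θ) ^ m) ν := by
    intro k m
    refine Integrable.of_bound (by fun_prop) 1 ?_
    filter_upwards [hae] with θ hθ
    have h0 : 0 ≤ 1 - θ := by linarith [hθ.2]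
    have h1 : 1 - θ ≤ 1 := by linarith [hθ.1]
    rw [Real.norm_eq_abs, abs_of_nonneg (mul_nonneg (pow_nonneg hθ.1 _) (pow_nonneg h0 _))]
    exact mul_le_one₀ (pow_le_one₀ hθ.1 hθ.2) (pow_nonneg h0 _) (pow_le_one₀ h0 h1)
  have hnn : ∀ n k m : ℕ, 0 ≤ (n.choose k : ℝ) * ∫ θ, θ ^ k * (1 - θ) ^ m ∂ν := by
    intro n k m
    refine mul_nonneg (by positivity) (integral_nonneg_of_ae ?_)
    filter_upwards [hae] with θ hθ
    exact mul_nonneg (pow_nonneg hθ.1 _) (pow_nonneg (by linarith [hθ.2]) _)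
  rw [← tendsto_add_atTop_iff_nat 1]
  have heq : ∀ n : ℕ, ∫ x, f x ∂(lawDnDivN ν (n + 1)) =
      ∫ θ, ∑ k ∈ Finset.range (n + 1), ((n.choose k : ℝ) * (θ ^ k * (1 - θ) ^ (n - k)))
        * f ((k : ℝ) / ((n + 1 : ℕ) : ℝ)) ∂ν := by
    intro n
    rw [integral_finsetSum _ fun k _ => ((hint k (n - k)).const_mul _).mul_const _]
    unfold lawDnDivN
    rw [integral_finsetSum_measure]
    · refine Finset.sum_congr rfl fun k _ => ?_
      rw [integral_smul_measure, integral_dirac, integral_mul_const, integral_const_mul,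
        Nat.add_sub_cancel, ENNReal.toReal_ofReal (hnn _ _ _), smul_eq_mul]
    · intro k _
      exact (f.integrable _).smul_measure ENNReal.ofReal_ne_top
  simp only [heq]
  refine tendsto_integral_of_dominated_convergence (fun _ => ‖f‖) ?_ (integrable_const _) ?_ ?_
  · intro n
    exact Continuous.aestronglyMeasurable (by fun_prop)
  · intro n
    filter_upwards [hae] with θ hθ
    have hs : ∑ k ∈ Finset.range (n + 1), (n.choose k : ℝ) * (θ ^ k * (1 - θ) ^ (n - k)) = 1 := by
      have := bernstein.probability n ⟨θ, hθ⟩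
      simpa only [bernstein_apply, mul_assoc, Finset.sum_range] using this
    calc _ ≤ ∑ k ∈ Finset.range (n + 1), (n.choose k : ℝ) * (θ ^ k * (1 - θ) ^ (n - k)) * ‖f‖ := by
          refine (norm_sum_le _ _).trans (Finset.sum_le_sum fun k _ => ?_)
          have h0 : 0 ≤ (n.choose k : ℝ) * (θ ^ k * (1 - θ) ^ (n - k)) :=
            mul_nonneg (by positivity)
              (mul_nonneg (pow_nonneg hθ.1 _) (pow_nonneg (by linarith [hθ.2]) _))
          rw [norm_mul, Real.norm_of_nonneg h0]
          exact mul_le_mul_of_nonneg_left (f.norm_coe_le_norm _) h0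
      _ = ‖f‖ := by rw [← Finset.sum_mul, hs, one_mul]
  · filter_upwards [hae] with θ hθ
    exact aux_pointwise f f.continuous ⟨θ, hθ⟩
end

section
/- Let G_n be the random graph of Construction 1 on {1,…,n} built from distributions ν_k, with D_k = |S_k|. Let F be a finite simple graph on {1,…,m}, σ a permutation of {1,…,m}, and d_j = d_j(F_σ) = #{i < j : {i,j} ∈ E(F_σ)} the indegree of j in F_σ. Then E[n_≤(F_σ, G_n)] = Σ ∏_{j=1}^m E[(D_{φ(j)})_{d_j}] / ((φ(j)−1)_{d_j}), where the sum is over all strictly increasing maps φ : {1,…,m} → {1,…,n} (i.e. 1 ≤ φ(1) < φ(2) < ⋯ < φ(m) ≤ n), with the convention D_1 = 0. -/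
open MeasureTheory Filter
open scoped ENNReal

instance (n : ℕ) : MeasurableSpace (Finset (Fin n)) := ⊤

/-- The law of the random neighbourhood set `S_v ⊆ {i : i < v}` of vertex `v` in
Construction 1: `P(S_v = A) = q_v(|A|) / C(v, |A|)` for `A ⊆ {i : i < v}` (`v` has `v`
predecessors since vertices are 0-indexed; `q v` is the indegree distribution of `v`,
supported on `{0,…,v}`). -/
noncomputable def nbhdMeasure (n : ℕ) (q : ℕ → ℕ → ℝ≥0∞) (v : Fin n) :
    Measure (Finset (Fin n)) :=
  ∑ A : Finset (Fin n),
    (if A ⊆ Finset.Iio v then q v A.card / ((v : ℕ).choose A.card : ℝ≥0∞) else 0) •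
      Measure.dirac A

/-- The joint law of the independent random sets `S_v`, `v` a vertex of `G_n`. -/
noncomputable def con1Measure (n : ℕ) (q : ℕ → ℕ → ℝ≥0∞) :
    Measure (Fin n → Finset (Fin n)) :=
  Measure.pi fun v => nbhdMeasure n q v

/-- The graph `G_n` of Construction 1: for `i < k`, the edge `{i,k}` is present
iff `i ∈ S_k`. -/
def graphOf {n : ℕ} (ω : Fin n → Finset (Fin n)) : SimpleGraph (Fin n) where
  Adj i j := (i < j ∧ i ∈ ω j) ∨ (j < i ∧ j ∈ ω i)
  symm := ⟨fun _ _ h => h.symm⟩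
  loopless := ⟨fun i h => by rcases h with ⟨h, -⟩ | ⟨h, -⟩ <;> exact absurd h (lt_irrefl i)⟩

/-- `F_σ`: the graph `F` with vertices relabelled by `i ↦ σ i`. -/
def relabel {m : ℕ} (σ : Equiv.Perm (Fin m)) (F : SimpleGraph (Fin m)) : SimpleGraph (Fin m) where
  Adj i j := F.Adj (σ.symm i) (σ.symm j)
  symm := ⟨fun _ _ h => F.symm.symm _ _ h⟩
  loopless := ⟨fun _ h => F.loopless.irrefl _ h⟩

/-- `d_j(F) = #{i < j : {i,j} ∈ E(F)}`, the indegree of `j` when edges are directed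
towards the larger endpoint. -/
noncomputable def indeg {m : ℕ} (F : SimpleGraph (Fin m)) (j : Fin m) : ℕ :=
  Nat.card {i : Fin m // i < j ∧ F.Adj i j}

/-- `n_≤(F,G)`: the number of strictly increasing homomorphisms `F → G`. -/
noncomputable def incHomCount {m n : ℕ} (F : SimpleGraph (Fin m)) (G : SimpleGraph (Fin n)) : ℕ :=
  Nat.card {φ : Fin m → Fin n // StrictMono φ ∧ ∀ i j, F.Adj i j → G.Adj (φ i) (φ j)}

open scoped Classical in
/-- The strictly increasing maps `{1,…,m} → {1,…,n}`. -/
noncomputable def incMaps (m n : ℕ) : Finset (Fin m → Fin n) :=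
  Finset.univ.filter StrictMono

noncomputable def wt (n : ℕ) (q : ℕ → ℕ → ℝ≥0∞) (v : Fin n) (A : Finset (Fin n)) : ℝ≥0∞ :=
  if A ⊆ Finset.Iio v then q v A.card / ((v : ℕ).choose A.card : ℝ≥0∞) else 0

lemma nbhd_singleton (n : ℕ) (q : ℕ → ℕ → ℝ≥0∞) (v : Fin n) (A : Finset (Fin n)) :
    nbhdMeasure n q v {A} = wt n q v A := by
  classical
  unfold nbhdMeasure wt
  rw [Measure.finsetSum_apply, Finset.sum_eq_single A]
  · split_ifs <;> simp
  · intro B _ hB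
    split_ifs <;> simp [hB]
  · simp

lemma sum_wt {M : Type*} [AddCommMonoid M] (n : ℕ) (v : Fin n) (g : Finset (Fin n) → M) :
    ∑ A : Finset (Fin n), (if A ⊆ Finset.Iio v then g A else 0)
      = ∑ k ∈ Finset.range ((v : ℕ) + 1), ∑ A ∈ Finset.powersetCard k (Finset.Iio v), g A := by
  rw [← Finset.sum_filter]
  have : (Finset.univ.filter fun A : Finset (Fin n) => A ⊆ Finset.Iio v)
      = (Finset.Iio v).powerset := by ext; simp
  rw [this, Finset.sum_powerset, Fin.card_Iio]

lemma nbhd_prob (n : ℕ) (q : ℕ → ℕ → ℝ≥0∞)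
    (hq1 : ∀ v : ℕ, ∑ d ∈ Finset.range (v + 1), q v d = 1) (v : Fin n) :
    IsProbabilityMeasure (nbhdMeasure n q v) := by
  constructor
  have h : nbhdMeasure n q v Set.univ = ∑ A : Finset (Fin n), wt n q v A := by
    rw [← Finset.coe_univ, ← sum_measure_singleton]
    exact Finset.sum_congr rfl fun A _ => nbhd_singleton n q v A
  rw [h]
  unfold wt
  rw [sum_wt, ← hq1 v]
  refine Finset.sum_congr rfl fun k hk => ?_
  rw [Finset.sum_powersetCard k _ (fun k => q v k / ((v : ℕ).choose k : ℝ≥0∞)), Fin.card_Iio,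
    nsmul_eq_mul]
  refine ENNReal.mul_div_cancel ?_ (by simp)
  have : k ≤ (v : ℕ) := by simpa [Nat.lt_succ_iff] using hk
  exact_mod_cast (Nat.choose_pos this).ne'

lemma nbhd_integral (n : ℕ) (q : ℕ → ℕ → ℝ≥0∞)
    (hq1 : ∀ v : ℕ, ∑ d ∈ Finset.range (v + 1), q v d = 1) (v : Fin n)
    (f : Finset (Fin n) → ℝ) :
    ∫ A, f A ∂(nbhdMeasure n q v) = ∑ k ∈ Finset.range ((v : ℕ) + 1),
      (q v k / ((v : ℕ).choose k : ℝ≥0∞)).toReal *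
        ∑ A ∈ Finset.powersetCard k (Finset.Iio v), f A := by
  have := nbhd_prob n q hq1 v
  rw [integral_fintype (Integrable.of_finite)]
  have : ∀ A : Finset (Fin n), (nbhdMeasure n q v).real {A} • f A =
      if A ⊆ Finset.Iio v then
        (q v A.card / ((v : ℕ).choose A.card : ℝ≥0∞)).toReal * f A else 0 := by
    intro A
    rw [Measure.real, nbhd_singleton, wt]
    split_ifs <;> simp
  rw [Finset.sum_congr rfl fun A _ => this A, sum_wt]
  refine Finset.sum_congr rfl fun k hk => ?_
  rw [Finset.mul_sum]
  refine Finset.sum_congr rfl fun A hA => ?_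
  rw [(Finset.mem_powersetCard.1 hA).2]

lemma key (n : ℕ) (q : ℕ → ℕ → ℝ≥0∞)
    (hq1 : ∀ v : ℕ, ∑ d ∈ Finset.range (v + 1), q v d = 1) (v : Fin n)
    (T : Finset (Fin n)) (hT : T ⊆ Finset.Iio v) :
    ∫ A, (if T ⊆ A then (1 : ℝ) else 0) ∂(nbhdMeasure n q v) =
      (∫ A, ((A.card.descFactorial T.card : ℕ) : ℝ) ∂(nbhdMeasure n q v)) /
        ((v : ℕ).descFactorial T.card : ℝ) := by
  have hTv : T.card ≤ (v : ℕ) := by simpa using Finset.card_le_card hT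
  have hpos : ((v : ℕ).descFactorial T.card : ℝ) ≠ 0 := by
    have := (Nat.descFactorial_eq_zero_iff_lt (n := (v : ℕ)) (k := T.card)).not.2 (by omega)
    exact_mod_cast this
  rw [eq_div_iff hpos, nbhd_integral n q hq1, nbhd_integral n q hq1, Finset.sum_mul]
  refine Finset.sum_congr rfl fun k hk => ?_
  rw [mul_assoc]
  congr 1
  rw [Finset.sum_powersetCard k _ (fun k => ((k.descFactorial T.card : ℕ) : ℝ)), Fin.card_Iio,
    nsmul_eq_mul, Finset.sum_boole]
  norm_cast
  rcases le_or_gt T.card k with h | h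
  · rw [Finset.card_filter_powersetCard_subset _ _ _ hT h, Fin.card_Iio,
      Nat.descFactorial_eq_factorial_mul_choose, Nat.descFactorial_eq_factorial_mul_choose]
    have := Nat.choose_mul (n := v) h
    calc _ = (T.card).factorial * ((v : ℕ).choose T.card * ((v : ℕ) - T.card).choose (k - T.card)) := by ring
      _ = _ := by rw [← this]; ring
  · rw [Nat.descFactorial_eq_zero_iff_lt.2 h, mul_zero, Finset.card_eq_zero.2, zero_mul]
    refine Finset.filter_eq_empty_iff.2 fun A hA hTA => ?_
    have := Finset.card_le_card hTA
    rw [(Finset.mem_powersetCard.1 hA).2] at this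
    omega

open scoped Classical in
noncomputable def preImg {m n : ℕ} (F : SimpleGraph (Fin m)) (φ : Fin m → Fin n) (j : Fin m) :
    Finset (Fin n) := (Finset.univ.filter fun i => i < j ∧ F.Adj i j).image φ

lemma hom_iff {m n : ℕ} (F : SimpleGraph (Fin m)) (φ : Fin m → Fin n) (hφ : StrictMono φ)
    (ω : Fin n → Finset (Fin n)) :
    (∀ i j, F.Adj i j → (graphOf ω).Adj (φ i) (φ j)) ↔ ∀ j, preImg F φ j ⊆ ω (φ j) := by
  classical
  constructor
  · intro h j x hx
    simp only [preImg, Finset.mem_image, Finset.mem_filter, Finset.mem_univ, true_and] at hx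
    obtain ⟨i, ⟨hij, ha⟩, rfl⟩ := hx
    rcases h i j ha with h | h
    · exact h.2
    · exact absurd (hφ hij) (not_lt.2 h.1.le)
  · have aux : (∀ j, preImg F φ j ⊆ ω (φ j)) → ∀ i j, i < j → F.Adj i j → φ i ∈ ω (φ j) := by
      intro h i j hij ha
      apply h j
      simp only [preImg, Finset.mem_image, Finset.mem_filter, Finset.mem_univ, true_and]
      exact ⟨i, ⟨hij, ha⟩, rfl⟩
    intro h i j ha
    rcases lt_trichotomy i j with hij | hij | hij
    · exact Or.inl ⟨hφ hij, aux h i j hij ha⟩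
    · exact absurd hij ha.ne
    · exact Or.inr ⟨hφ hij, aux h j i hij ha.symm⟩

lemma count_eq {m n : ℕ} (F : SimpleGraph (Fin m)) (ω : Fin n → Finset (Fin n)) :
    (incHomCount F (graphOf ω) : ℝ) = ∑ φ ∈ incMaps m n, ∏ j : Fin m,
      if preImg F φ j ⊆ ω (φ j) then (1 : ℝ) else 0 := by
  classical
  have h1 : ∀ φ : Fin m → Fin n, (∏ j : Fin m, if preImg F φ j ⊆ ω (φ j) then (1 : ℝ) else 0)
      = if ∀ j, preImg F φ j ⊆ ω (φ j) then 1 else 0 := by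
    intro φ
    rw [Finset.prod_boole]
    simp
  simp_rw [h1]
  rw [Finset.sum_boole, incHomCount, Nat.card_eq_fintype_card, Fintype.card_subtype, incMaps,
    Finset.filter_filter]
  congr 2
  ext φ
  simp only [Finset.mem_filter, Finset.mem_univ, true_and]
  exact and_congr_right fun h => hom_iff F φ h ω

lemma preImg_card {m n : ℕ} (F : SimpleGraph (Fin m)) (φ : Fin m → Fin n) (hφ : StrictMono φ)
    (j : Fin m) : (preImg F φ j).card = indeg F j := by
  classical
  rw [preImg, Finset.card_image_of_injective _ hφ.injective, indeg, Nat.card_eq_fintype_card,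
    Fintype.card_subtype]

lemma preImg_sub {m n : ℕ} (F : SimpleGraph (Fin m)) (φ : Fin m → Fin n) (hφ : StrictMono φ)
    (j : Fin m) : preImg F φ j ⊆ Finset.Iio (φ j) := by
  classical
  intro x hx
  simp only [preImg, Finset.mem_image, Finset.mem_filter, Finset.mem_univ, true_and] at hx
  obtain ⟨i, ⟨hij, ha⟩, rfl⟩ := hx
  simpa using hφ hij

lemma prod_int {m n : ℕ} (μ : Fin n → Measure (Finset (Fin n))) [∀ v, IsProbabilityMeasure (μ v)]
    (φ : Fin m → Fin n) (hφ : Function.Injective φ) (g : Fin m → Finset (Fin n) → ℝ) :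
    ∫ ω, ∏ j, g j (ω (φ j)) ∂(Measure.pi μ) = ∏ j, ∫ A, g j A ∂(μ (φ j)) := by
  classical
  have h1 : ∀ ω : Fin n → Finset (Fin n), ∏ j, g j (ω (φ j)) =
      ∏ v, ∏ j with φ j = v, g j (ω v) := by
    intro ω
    rw [← Finset.prod_fiberwise _ φ]
    refine Finset.prod_congr rfl fun v _ => Finset.prod_congr rfl fun j hj => ?_
    rw [(Finset.mem_filter.1 hj).2]
  simp_rw [h1]
  rw [integral_fintype_prod_eq_prod (fun v A => ∏ j with φ j = v, g j A),
    ← Finset.prod_fiberwise _ φ]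
  refine Finset.prod_congr rfl fun v _ => ?_
  by_cases hv : ∃ j, φ j = v
  · obtain ⟨j, rfl⟩ := hv
    have : (Finset.univ.filter fun i => φ i = φ j) = {j} := by
      ext i; simp [hφ.eq_iff]
    simp [this]
  · have : (Finset.univ.filter fun i => φ i = v) = ∅ := by
      refine Finset.filter_eq_empty_iff.2 fun i _ h => hv ⟨i, h⟩
    simp [this]

/-- For the Construction 1 graph `G_n` (with `D_v = |S_v|`), a graph `F`
on `{1,…,m}` and a permutation `σ` with indegrees `d_j = d_j(F_σ)`:
`E[n_≤(F_σ, G_n)] = Σ_{φ increasing} ∏_j E[(D_{φ(j)})_{d_j}] / ((φ(j)−1)_{d_j})`,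
where `(x)_d` is the falling factorial and, vertices being 0-indexed, vertex `φ(j)` has
`(φ(j) : ℕ)` predecessors. -/
theorem stmt7 (n m : ℕ) (q : ℕ → ℕ → ℝ≥0∞)
    (hq1 : ∀ v : ℕ, ∑ d ∈ Finset.range (v + 1), q v d = 1)
    (hq0 : ∀ v d : ℕ, v < d → q v d = 0)
    (F : SimpleGraph (Fin m)) (σ : Equiv.Perm (Fin m)) :
    ∫ ω, (incHomCount (relabel σ F) (graphOf ω) : ℝ) ∂(con1Measure n q)
      = ∑ φ ∈ incMaps m n, ∏ j : Fin m,
          (∫ ω, (((ω (φ j)).card).descFactorial (indeg (relabel σ F) j) : ℝ)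
              ∂(con1Measure n q))
            / (((φ j : ℕ)).descFactorial (indeg (relabel σ F) j) : ℝ) := by
  have hp : ∀ v, IsProbabilityMeasure (nbhdMeasure n q v) := nbhd_prob n q hq1
  have hp' : IsProbabilityMeasure (con1Measure n q) := by unfold con1Measure; infer_instance
  simp_rw [count_eq]
  rw [integral_finsetSum _ fun φ _ => Integrable.of_finite]
  refine Finset.sum_congr rfl fun φ hφ => ?_
  have hφ : StrictMono φ := by simpa [incMaps] using hφ
  unfold con1Measure
  rw [prod_int _ φ hφ.injective
    (fun j A => if preImg (relabel σ F) φ j ⊆ A then (1 : ℝ) else 0)]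
  refine Finset.prod_congr rfl fun j _ => ?_
  rw [key n q hq1 _ _ (preImg_sub _ φ hφ j), preImg_card _ φ hφ j]
  congr 1
  exact (integral_comp_eval (μ := fun v => nbhdMeasure n q v) (i := φ j)
    (f := fun A : Finset (Fin n) => ((A.card.descFactorial (indeg (relabel σ F) j) : ℕ) : ℝ))
    (Integrable.of_finite).aestronglyMeasurable).symm
end

section
/- Let G_n, n ≥ 2, be the random graphs of Construction 1 built from distributions ν_n, with D_n = |S_n|, and suppose D_n/n converges in distribution to a probability measure ν on [0,1] as n → ∞. Let F be a finite simple graph on {1,…,m} and σ a permutation of {1,…,m}, with indegrees d_j = d_j(F_σ). Then E[n_≤(F_σ, G_n)] / n^m → (1/m!) ∏_{j=1}^m M_{d_j} as n → ∞, where M_d = ∫₀¹ x^d dν(x). -/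
open MeasureTheory Filter
open scoped ENNReal

lemma aux_prod_sub {ι : Type*} (s : Finset ι) (a b : ι → ℝ)
    (ha : ∀ i ∈ s, |a i| ≤ 1) (hb : ∀ i ∈ s, |b i| ≤ 1) :
    |∏ i ∈ s, a i - ∏ i ∈ s, b i| ≤ ∑ i ∈ s, |a i - b i| := by
  classical
  induction s using Finset.induction_on with
  | empty => simp
  | insert i s hi ih =>
    rw [Finset.prod_insert hi, Finset.prod_insert hi, Finset.sum_insert hi]
    have ih' := ih (fun j hj => ha j (Finset.mem_insert_of_mem hj))
      (fun j hj => hb j (Finset.mem_insert_of_mem hj))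
    have h1 : |∏ j ∈ s, b j| ≤ 1 := by
      rw [Finset.abs_prod]
      exact Finset.prod_le_one (fun _ _ => abs_nonneg _)
        (fun j hj => hb j (Finset.mem_insert_of_mem hj))
    have h2 := ha i (Finset.mem_insert_self i s)
    have : a i * ∏ j ∈ s, a j - b i * ∏ j ∈ s, b j
      = a i * (∏ j ∈ s, a j - ∏ j ∈ s, b j) + (a i - b i) * ∏ j ∈ s, b j := by ring
    rw [this]
    refine (abs_add_le _ _).trans ?_
    rw [abs_mul, abs_mul]
    have e1 := mul_le_of_le_one_left (abs_nonneg (∏ j ∈ s, a j - ∏ j ∈ s, b j)) h2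
    have e2 := mul_le_of_le_one_right (abs_nonneg (a i - b i)) h1
    linarith

lemma aux_card_incMaps (m n : ℕ) : (incMaps m n).card = n.choose m := by
  classical
  have e : {φ : Fin m → Fin n // StrictMono φ} ≃ (Fin m ↪o Fin n) :=
    { toFun := fun φ => OrderEmbedding.ofStrictMono φ.1 φ.2
      invFun := fun f => ⟨f, f.strictMono⟩
      left_inv := fun φ => rfl
      right_inv := fun f => by ext; rfl }
  have h := Nat.card_congr (e.trans Set.powersetCard.ofFinEmbEquiv)
  rw [Set.powersetCard.card] at h
  rw [incMaps, ← Fintype.card_subtype, ← Nat.card_eq_fintype_card, h]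
  simp

lemma aux_sum_fun {m n : ℕ} (j : Fin m) (h : ℕ → ℝ) :
    ∑ φ : Fin m → Fin n, h (φ j) = (n : ℝ) ^ (m - 1) * ∑ v ∈ Finset.range n, h v := by
  classical
  have := Finset.prod_univ_sum (κ := fun _ : Fin m => Fin n) (fun _ => Finset.univ)
    (fun i (v : Fin n) => if i = j then h v else 1)
  rw [Fintype.piFinset_univ] at this
  have h2 : ∀ φ : Fin m → Fin n, ∏ i, (if i = j then h (φ i) else 1) = h (φ j) := by
    intro φ; simp
  simp only [h2] at this
  rw [← this, ← Finset.mul_prod_erase _ _ (Finset.mem_univ j)]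
  rw [Finset.prod_congr rfl (g := fun _ => (n : ℝ))]
  · simp [Finset.sum_range, mul_comm]
  · intro i hi
    simp [Finset.ne_of_mem_erase hi]

lemma aux_limit (m : ℕ) (g : Fin m → ℕ → ℝ) (L : Fin m → ℝ) (hg : ∀ j v, |g j v| ≤ 1)
    (hL : ∀ j, |L j| ≤ 1) (hlim : ∀ j, Tendsto (g j) atTop (nhds (L j))) :
    Tendsto (fun n => (∑ φ ∈ incMaps m n, ∏ j, g j (φ j)) / (n : ℝ) ^ m) atTop
      (nhds ((1 / (Nat.factorial m : ℝ)) * ∏ j, L j)) := by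
  classical
  have h1 : Tendsto (fun n : ℕ => (n.choose m : ℝ) / (n : ℝ) ^ m * ∏ j, L j) atTop
      (nhds ((1 / (Nat.factorial m : ℝ)) * ∏ j, L j)) := by
    refine Tendsto.mul_const _ ?_
    have h := (isEquivalent_choose m).div (Asymptotics.IsEquivalent.refl (u := fun n : ℕ => (n : ℝ) ^ m))
    refine (h.symm.tendsto_nhds ?_)
    refine tendsto_const_nhds.congr' ?_
    filter_upwards [eventually_gt_atTop 0] with n hn
    have : (n : ℝ) ≠ 0 := by positivity
    simp; field_simp
  have h2 : Tendsto (fun n : ℕ => ∑ j, ((n : ℝ)⁻¹ * ∑ v ∈ Finset.range n, |g j v - L j|)) atTop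
      (nhds 0) := by
    have : (0 : ℝ) = ∑ j : Fin m, 0 := by simp
    rw [this]
    refine tendsto_finsetSum _ fun j _ => ?_
    refine Filter.Tendsto.cesaro ?_
    have := ((hlim j).sub_const (L j)).abs
    simpa using this
  have h3 : Tendsto (fun n => (∑ φ ∈ incMaps m n, ∏ j, g j (φ j)) / (n : ℝ) ^ m -
      (n.choose m : ℝ) / (n : ℝ) ^ m * ∏ j, L j) atTop (nhds 0) := by
    refine squeeze_zero_norm' ?_ h2
    filter_upwards [eventually_gt_atTop 0] with n hn
    have hn' : (0 : ℝ) < n := by positivity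
    have e : (∑ φ ∈ incMaps m n, ∏ j, g j (φ j)) / (n : ℝ) ^ m -
      (n.choose m : ℝ) / (n : ℝ) ^ m * ∏ j, L j =
      (∑ φ ∈ incMaps m n, (∏ j, g j (φ j) - ∏ j, L j)) / (n : ℝ) ^ m := by
      rw [Finset.sum_sub_distrib, Finset.sum_const, aux_card_incMaps, nsmul_eq_mul]; ring
    rw [e, Real.norm_eq_abs, abs_div, abs_of_pos (by positivity : (0 : ℝ) < (n : ℝ) ^ m),
      div_le_iff₀ (by positivity)]
    calc |∑ φ ∈ incMaps m n, (∏ j, g j (φ j) - ∏ j, L j)|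
        ≤ ∑ φ ∈ incMaps m n, |∏ j, g j (φ j) - ∏ j, L j| := Finset.abs_sum_le_sum_abs _ _
      _ ≤ ∑ φ ∈ incMaps m n, ∑ j, |g j (φ j) - L j| :=
          Finset.sum_le_sum fun φ _ => aux_prod_sub _ _ _ (fun j _ => hg j _) (fun j _ => hL j)
      _ ≤ ∑ φ : Fin m → Fin n, ∑ j, |g j (φ j) - L j| :=
          Finset.sum_le_sum_of_subset_of_nonneg (Finset.subset_univ _)
            fun _ _ _ => Finset.sum_nonneg fun _ _ => abs_nonneg _
      _ = ∑ j, ∑ φ : Fin m → Fin n, |g j (φ j) - L j| := Finset.sum_comm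
      _ = _ := by
          rw [Finset.sum_mul]
          refine Finset.sum_congr rfl fun j _ => ?_
          rw [aux_sum_fun j (fun v => |g j v - L j|)]
          have : m = (m - 1) + 1 := by have := j.2; omega
          rw [show (n : ℝ) ^ m = (n : ℝ) ^ (m - 1) * n by rw [← pow_succ, ← this]]
          field_simp
  simpa using h3.add h1

lemma aux_ratio_le (d e v : ℕ) (h : e ≤ v) :
    (e.descFactorial d : ℝ) / v.descFactorial d ≤ 1 := by
  refine div_le_one_of_le₀ ?_ (by positivity)
  exact_mod_cast Nat.descFactorial_le d h

lemma aux_ratio (d e v : ℕ) (h : e ≤ v) (hd : d < v) :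
    |(e.descFactorial d : ℝ) / v.descFactorial d - ((e : ℝ) / ((v : ℝ) + 1)) ^ d| ≤
      ∑ i ∈ Finset.range d, ((i : ℝ) + 1) / ((v : ℝ) - i) := by
  rw [Nat.descFactorial_eq_prod_range, Nat.descFactorial_eq_prod_range, Nat.cast_prod,
    Nat.cast_prod, ← Finset.prod_div_distrib]
  have : ((e : ℝ) / ((v : ℝ) + 1)) ^ d = ∏ i ∈ Finset.range d, ((e : ℝ) / ((v : ℝ) + 1)) := by
    rw [Finset.prod_const, Finset.card_range]
  have hev : (e : ℝ) ≤ v := by exact_mod_cast h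
  have he0 : (0 : ℝ) ≤ e := by positivity
  rw [this]
  refine (aux_prod_sub _ _ _ ?_ ?_).trans (Finset.sum_le_sum ?_)
  · intro i _
    rw [abs_of_nonneg (by positivity)]
    refine div_le_one_of_le₀ ?_ (by positivity)
    exact_mod_cast Nat.sub_le_sub_right h i
  · intro i _
    rw [abs_of_nonneg (by positivity)]
    exact div_le_one_of_le₀ (by linarith) (by positivity)
  · intro i hi
    have hi := Finset.mem_range.1 hi
    have hiv : (i : ℝ) + 1 ≤ v := by exact_mod_cast (by omega : i + 1 ≤ v)
    have hi0 : (0 : ℝ) ≤ i := by positivity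
    have hvi : (0 : ℝ) < (v : ℝ) - i := by linarith
    rw [Nat.cast_sub (by omega : i ≤ v)]
    rcases le_total i e with hie | hie
    · have hie' : (i : ℝ) ≤ e := by exact_mod_cast hie
      rw [Nat.cast_sub hie, div_sub_div _ _ hvi.ne' (by positivity), abs_div,
        abs_of_pos (a := ((v : ℝ) - i) * (v + 1)) (by positivity), div_le_div_iff₀ (by positivity) hvi]
      have : |((e : ℝ) - i) * (v + 1) - (v - i) * e| ≤ (i + 1) * (v + 1) := by
        rw [abs_le]; constructor <;> nlinarith
      nlinarith
    · rw [Nat.sub_eq_zero_of_le hie]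
      have hie' : (e : ℝ) ≤ i := by exact_mod_cast hie
      simp only [Nat.cast_zero, zero_div, zero_sub, abs_neg]
      rw [abs_of_nonneg (by positivity)]
      gcongr <;> linarith

/-- probability that a fixed `d`-set of predecessors lies in `S_v` -/
noncomputable def auxP (q : ℕ → ℕ → ℝ≥0∞) (d v : ℕ) : ℝ :=
  ∑ e ∈ Finset.range (v + 1), (q v e).toReal * ((e.descFactorial d : ℝ) / v.descFactorial d)

lemma aux_q_sum (q : ℕ → ℕ → ℝ≥0∞)
    (hq1 : ∀ v : ℕ, ∑ d ∈ Finset.range (v + 1), q v d = 1) (v : ℕ) :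
    ∑ d ∈ Finset.range (v + 1), (q v d).toReal = 1 := by
  rw [← ENNReal.toReal_sum, hq1]; · simp
  intro d hd h
  have := Finset.single_le_sum (f := q v) (fun _ _ => zero_le) hd
  rw [hq1, h] at this
  simp at this

lemma auxP_nonneg (q : ℕ → ℕ → ℝ≥0∞) (d v : ℕ) : 0 ≤ auxP q d v :=
  Finset.sum_nonneg fun _ _ => by positivity

lemma auxP_le (q : ℕ → ℕ → ℝ≥0∞)
    (hq1 : ∀ v : ℕ, ∑ d ∈ Finset.range (v + 1), q v d = 1) (d v : ℕ) : auxP q d v ≤ 1 := by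
  rw [← aux_q_sum q hq1 v]
  refine Finset.sum_le_sum fun e he => ?_
  exact mul_le_of_le_one_right (by positivity)
    (aux_ratio_le d e v (by have := Finset.mem_range.1 he; omega))

lemma aux_clamp_bdd (d : ℕ) (x y : ℝ) :
    dist ((max 0 (min x 1)) ^ d) ((max 0 (min y 1)) ^ d) ≤ 1 := by
  have h : ∀ x : ℝ, 0 ≤ (max 0 (min x 1)) ^ d ∧ (max 0 (min x 1)) ^ d ≤ 1 := fun x =>
    ⟨by positivity, pow_le_one₀ (le_max_left _ _) (max_le zero_le_one (min_le_right _ _))⟩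
  rw [Real.dist_eq, abs_le]
  constructor <;> linarith [(h x).1, (h x).2, (h y).1, (h y).2]

lemma auxP_tendsto (ν : Measure ℝ) [IsProbabilityMeasure ν] (hν : ν (Set.Icc 0 1) = 1)
    (q : ℕ → ℕ → ℝ≥0∞)
    (hq1 : ∀ v : ℕ, ∑ d ∈ Finset.range (v + 1), q v d = 1)
    (hconv : ∀ f : BoundedContinuousFunction ℝ ℝ,
      Tendsto (fun k => ∑ d ∈ Finset.range k, (q (k - 1) d).toReal * f ((d : ℝ) / k))
        atTop (nhds (∫ x, f x ∂ν))) (d : ℕ) :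
    Tendsto (auxP q d) atTop (nhds (∫ x, x ^ d ∂ν)) := by
  let f : BoundedContinuousFunction ℝ ℝ :=
    BoundedContinuousFunction.mkOfBound ⟨fun x => (max 0 (min x 1)) ^ d, by fun_prop⟩ 1
      (aux_clamp_bdd d)
  have hf : ∀ x, f x = (max 0 (min x 1)) ^ d := fun x => rfl
  have hae : ∀ᵐ x ∂ν, x ∈ Set.Icc (0 : ℝ) 1 := by
    rw [← prob_compl_eq_zero_iff measurableSet_Icc] at hν
    exact measure_eq_zero_iff_ae_notMem.1 hν |>.mono fun x hx => by simpa using hx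
  have hint : ∫ x, f x ∂ν = ∫ x, x ^ d ∂ν := by
    refine integral_congr_ae ?_
    filter_upwards [hae] with x hx
    rw [hf, min_eq_left hx.2, max_eq_right hx.1]
  have h1 := (hconv f).comp (tendsto_add_atTop_nat 1)
  rw [hint] at h1
  have h2 : Tendsto (fun v : ℕ => ∑ i ∈ Finset.range d, ((i : ℝ) + 1) / ((v : ℝ) - i)) atTop
      (nhds 0) := by
    have : (0 : ℝ) = ∑ i ∈ Finset.range d, 0 := by simp
    rw [this]
    refine tendsto_finsetSum _ fun i _ => ?_
    refine Tendsto.div_atTop tendsto_const_nhds ?_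
    exact tendsto_atTop_add_const_right _ (-(i : ℝ)) tendsto_natCast_atTop_atTop
  have h3 : Tendsto (fun v => auxP q d v -
      ∑ e ∈ Finset.range (v + 1), (q (v + 1 - 1) e).toReal * f ((e : ℝ) / (v + 1 : ℕ))) atTop
      (nhds 0) := by
    refine squeeze_zero_norm' ?_ h2
    filter_upwards [eventually_gt_atTop d] with v hv
    rw [auxP, Nat.add_sub_cancel, ← Finset.sum_sub_distrib, Real.norm_eq_abs]
    refine (Finset.abs_sum_le_sum_abs _ _).trans ?_
    have key := aux_ratio d (v := v)
    generalize (∑ i ∈ Finset.range d, ((i : ℝ) + 1) / ((v : ℝ) - i)) = C at key ⊢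
    rw [← one_mul C, ← aux_q_sum q hq1 v, Finset.sum_mul]
    refine Finset.sum_le_sum fun e he => ?_
    have hev : e ≤ v := by have := Finset.mem_range.1 he; omega
    have hev' : (e : ℝ) ≤ v := by exact_mod_cast hev
    rw [← mul_sub, abs_mul, abs_of_nonneg ENNReal.toReal_nonneg]
    refine mul_le_mul_of_nonneg_left ?_ ENNReal.toReal_nonneg
    rw [hf, min_eq_left, max_eq_right (by positivity)]
    · push_cast
      exact key e hev hv
    · push_cast
      exact div_le_one_of_le₀ (by linarith) (by positivity)
  simpa using h3.add h1

lemma aux_count {n : ℕ} (B T : Finset (Fin n)) (h : B ⊆ T) (e : ℕ) :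
    (((T.powersetCard e).filter (fun A => B ⊆ A)).card : ℕ) * T.card.descFactorial B.card =
      T.card.choose e * e.descFactorial B.card := by
  classical
  rcases lt_or_ge e B.card with he | he
  · rw [Nat.descFactorial_eq_zero_iff_lt.2 he, mul_zero]
    have : (T.powersetCard e).filter (fun A => B ⊆ A) = ∅ := by
      refine Finset.filter_eq_empty_iff.2 fun A hA hBA => ?_
      have := Finset.card_le_card hBA
      rw [(Finset.mem_powersetCard.1 hA).2] at this
      omega
    simp [this]
  · have hc : ((T.powersetCard e).filter (fun A => B ⊆ A)).card =
        ((T \ B).powersetCard (e - B.card)).card := by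
      refine Finset.card_bij' (fun A _ => A \ B) (fun A _ => A ∪ B) ?_ ?_ ?_ ?_
      · intro A hA
        simp only [Finset.mem_filter, Finset.mem_powersetCard] at hA ⊢
        refine ⟨Finset.sdiff_subset_sdiff hA.1.1 subset_rfl, ?_⟩
        rw [Finset.card_sdiff_of_subset hA.2, hA.1.2]
      · intro A hA
        simp only [Finset.mem_filter, Finset.mem_powersetCard] at hA ⊢
        refine ⟨⟨Finset.union_subset (hA.1.trans Finset.sdiff_subset) h, ?_⟩,
          Finset.subset_union_right⟩
        rw [Finset.card_union_of_disjoint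
          (Finset.disjoint_of_subset_left hA.1 Finset.sdiff_disjoint), hA.2]
        omega
      · intro A hA
        simp only [Finset.mem_filter, Finset.mem_powersetCard] at hA
        exact Finset.sdiff_union_of_subset hA.2
      · intro A hA
        simp only [Finset.mem_powersetCard] at hA
        have := Finset.disjoint_of_subset_left hA.1 Finset.sdiff_disjoint
        rw [Finset.union_sdiff_right]
        exact Finset.sdiff_eq_self_of_disjoint this
    rw [hc, Finset.card_powersetCard, Finset.card_sdiff_of_subset h,
      Nat.descFactorial_eq_factorial_mul_choose, Nat.descFactorial_eq_factorial_mul_choose]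
    have := Nat.choose_mul (n := T.card) he
    linear_combination B.card.factorial * this.symm

lemma aux_q_ne_top (q : ℕ → ℕ → ℝ≥0∞)
    (hq1 : ∀ v : ℕ, ∑ d ∈ Finset.range (v + 1), q v d = 1) (v d : ℕ) (h : d ≤ v) :
    q v d ≠ ∞ := by
  intro h'
  have := Finset.single_le_sum (f := q v) (fun _ _ => zero_le)
    (Finset.mem_range.2 (by omega : d < v + 1))
  rw [hq1, h'] at this
  simp at this

lemma aux_nbhd (q : ℕ → ℕ → ℝ≥0∞)
    (hq1 : ∀ v : ℕ, ∑ d ∈ Finset.range (v + 1), q v d = 1) (n : ℕ) (v : Fin n)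
    (B : Finset (Fin n)) (hB : B ⊆ Finset.Iio v) :
    nbhdMeasure n q v {A | B ⊆ A} = ENNReal.ofReal (auxP q B.card v) := by
  classical
  have h1 : nbhdMeasure n q v {A | B ⊆ A} =
      ∑ A ∈ ((Finset.Iio v).powerset.filter (fun A => B ⊆ A)),
        ENNReal.ofReal ((q v A.card).toReal / ((v : ℕ).choose A.card : ℝ)) := by
    have hf : (Finset.Iio v).powerset.filter (fun A => B ⊆ A) =
        Finset.univ.filter (fun A => A ⊆ Finset.Iio v ∧ B ⊆ A) := by
      ext A; simp
    rw [hf, Finset.sum_filter, nbhdMeasure, Measure.finsetSum_apply]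
    refine Finset.sum_congr rfl fun A _ => ?_
    rw [Measure.smul_apply, Measure.dirac_apply' _ MeasurableSpace.measurableSet_top]
    by_cases hA : A ⊆ Finset.Iio v
    · by_cases hBA : B ⊆ A
      · have hc : A.card ≤ v := by simpa using Finset.card_le_card hA
        have p2 : (0 : ℝ) < (v : ℕ).choose A.card := by exact_mod_cast Nat.choose_pos hc
        rw [if_pos hA, if_pos ⟨hA, hBA⟩, ENNReal.ofReal_div_of_pos p2,
          ENNReal.ofReal_toReal (aux_q_ne_top q hq1 v _ hc), ENNReal.ofReal_natCast]
        simp [hBA]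
      · simp [hBA]
    · simp [hA]
  rw [h1, ← ENNReal.ofReal_sum_of_nonneg (fun _ _ => by positivity)]
  congr 1
  have hmaps : ∀ A ∈ (Finset.Iio v).powerset.filter (fun A => B ⊆ A),
      A.card ∈ Finset.range ((v : ℕ) + 1) := by
    intro A hA
    have := Finset.card_le_card (Finset.mem_powerset.1 (Finset.mem_filter.1 hA).1)
    rw [Fin.card_Iio] at this
    exact Finset.mem_range.2 (by omega)
  rw [← Finset.sum_fiberwise_of_maps_to hmaps, auxP]
  refine Finset.sum_congr rfl fun e he => ?_
  have hev : e ≤ v := by have := Finset.mem_range.1 he; omega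
  have hset : ((Finset.Iio v).powerset.filter (fun A => B ⊆ A)).filter (fun A => A.card = e) =
      ((Finset.Iio v).powersetCard e).filter (fun A => B ⊆ A) := by
    ext A; simp only [Finset.mem_filter, Finset.mem_powerset, Finset.mem_powersetCard]; tauto
  rw [Finset.sum_congr hset (g := fun _ => (q v e).toReal / ((v : ℕ).choose e : ℝ))
    (fun A hA => by
      rw [(Finset.mem_powersetCard.1 (Finset.mem_filter.1 hA).1).2]), Finset.sum_const,
    nsmul_eq_mul]
  have hcount := aux_count B _ hB e
  rw [Fin.card_Iio] at hcount
  have hcount' : ((((Finset.Iio v).powersetCard e).filter (fun A => B ⊆ A)).card : ℝ) *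
      (v : ℕ).descFactorial B.card = (v : ℕ).choose e * e.descFactorial B.card := by
    exact_mod_cast hcount
  have hBv : B.card ≤ v := by simpa using Finset.card_le_card hB
  have p1 : (0 : ℝ) < (v : ℕ).descFactorial B.card := by
    exact_mod_cast Nat.descFactorial_pos.2 hBv
  have p2 : (0 : ℝ) < (v : ℕ).choose e := by exact_mod_cast Nat.choose_pos hev
  field_simp
  linear_combination (q v e).toReal * hcount'

lemma aux_nbhd_prob (q : ℕ → ℕ → ℝ≥0∞)
    (hq1 : ∀ v : ℕ, ∑ d ∈ Finset.range (v + 1), q v d = 1) (n : ℕ) (v : Fin n) :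
    IsProbabilityMeasure (nbhdMeasure n q v) := by
  constructor
  have := aux_nbhd q hq1 n v ∅ (by simp)
  simp only [Finset.empty_subset, Set.setOf_true, Finset.card_empty] at this
  rw [this, auxP]
  simp [aux_q_sum q hq1]

/-- required neighbours of `φ j` -/
noncomputable def auxB {m n : ℕ} (F : SimpleGraph (Fin m)) (φ : Fin m → Fin n) (j : Fin m) :
    Finset (Fin n) := by
  classical
  exact (Finset.univ.filter (fun i => i < j ∧ F.Adj i j)).image φ

lemma auxB_mem {m n : ℕ} (F : SimpleGraph (Fin m)) (φ : Fin m → Fin n) (j : Fin m) (x : Fin n) :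
    x ∈ auxB F φ j ↔ ∃ i, (i < j ∧ F.Adj i j) ∧ φ i = x := by
  classical
  simp [auxB]

lemma auxB_card {m n : ℕ} (F : SimpleGraph (Fin m)) (φ : Fin m → Fin n) (hφ : StrictMono φ)
    (j : Fin m) : (auxB F φ j).card = indeg F j := by
  classical
  rw [auxB, Finset.card_image_of_injective _ hφ.injective, indeg, Nat.card_eq_fintype_card,
    Fintype.card_subtype]

lemma aux_event {m n : ℕ} (F : SimpleGraph (Fin m)) (φ : Fin m → Fin n) (hφ : StrictMono φ) :
    {ω : Fin n → Finset (Fin n) | ∀ i j, F.Adj i j → (graphOf ω).Adj (φ i) (φ j)} =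
      Set.pi Set.univ (fun v => {A | ∀ j, φ j = v → auxB F φ j ⊆ A}) := by
  ext ω
  simp only [Set.mem_setOf_eq, Set.mem_pi, Set.mem_univ, true_implies]
  constructor
  · rintro h v j rfl x hx
    obtain ⟨i, ⟨hij, hadj⟩, rfl⟩ := (auxB_mem F φ j x).1 hx
    rcases h i j hadj with h | h
    · exact h.2
    · exact absurd (hφ hij) (not_lt.2 h.1.le)
  · intro h i j hadj
    rcases lt_trichotomy i j with hij | hij | hij
    · exact Or.inl ⟨hφ hij, h _ j rfl ((auxB_mem F φ j _).2 ⟨i, ⟨hij, hadj⟩, rfl⟩)⟩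
    · exact absurd (hij ▸ hadj) (F.loopless.irrefl _)
    · exact Or.inr ⟨hφ hij, h _ i rfl ((auxB_mem F φ i _).2 ⟨j, ⟨hij, hadj.symm⟩, rfl⟩)⟩

lemma aux_event_prob (q : ℕ → ℕ → ℝ≥0∞)
    (hq1 : ∀ v : ℕ, ∑ d ∈ Finset.range (v + 1), q v d = 1) {m n : ℕ}
    (F : SimpleGraph (Fin m)) (φ : Fin m → Fin n) (hφ : StrictMono φ) :
    (con1Measure n q).real
      {ω : Fin n → Finset (Fin n) | ∀ i j, F.Adj i j → (graphOf ω).Adj (φ i) (φ j)} =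
      ∏ j, auxP q (indeg F j) (φ j) := by
  haveI := aux_nbhd_prob q hq1 n
  rw [aux_event F φ hφ, con1Measure, measureReal_def, Measure.pi_pi, ENNReal.toReal_prod]
  symm
  refine Finset.prod_of_injOn φ hφ.injective.injOn (fun _ _ => by simp) ?_ ?_
  · intro v _ hv
    have : {A : Finset (Fin n) | ∀ j, φ j = v → auxB F φ j ⊆ A} = Set.univ := by
      ext A
      simp only [Set.mem_setOf_eq, Set.mem_univ, iff_true]
      intro j hj
      exact absurd ⟨j, by simp, hj⟩ hv
    rw [this]; simp
  · intro j _
    have : {A : Finset (Fin n) | ∀ j', φ j' = φ j → auxB F φ j' ⊆ A} = {A | auxB F φ j ⊆ A} := by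
      ext A
      simp only [Set.mem_setOf_eq]
      exact ⟨fun h => h j rfl, fun h j' hj' => by rwa [hφ.injective hj']⟩
    rw [this, aux_nbhd q hq1, auxB_card F φ hφ, ENNReal.toReal_ofReal (auxP_nonneg _ _ _)]
    intro x hx
    obtain ⟨i, ⟨hij, -⟩, rfl⟩ := (auxB_mem F φ j x).1 hx
    exact Finset.mem_Iio.2 (hφ hij)

lemma aux_integral (q : ℕ → ℕ → ℝ≥0∞)
    (hq1 : ∀ v : ℕ, ∑ d ∈ Finset.range (v + 1), q v d = 1) {m n : ℕ}
    (F : SimpleGraph (Fin m)) :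
    ∫ ω, (incHomCount F (graphOf ω) : ℝ) ∂(con1Measure n q) =
      ∑ φ ∈ incMaps m n, ∏ j, auxP q (indeg F j) (φ j) := by
  classical
  haveI := aux_nbhd_prob q hq1 n
  haveI : IsProbabilityMeasure (con1Measure n q) := by unfold con1Measure; infer_instance
  have hms : ∀ s : Set (Fin n → Finset (Fin n)), MeasurableSet s := fun s =>
    s.toFinite.measurableSet
  have h1 : ∀ ω : Fin n → Finset (Fin n), (incHomCount F (graphOf ω) : ℝ) =
      ∑ φ ∈ incMaps m n,
        Set.indicator {ω : Fin n → Finset (Fin n) |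
          ∀ i j, F.Adj i j → (graphOf ω).Adj (φ i) (φ j)} (fun _ => (1 : ℝ)) ω := by
    intro ω
    rw [incHomCount, Nat.card_eq_fintype_card, Fintype.card_subtype, incMaps]
    simp only [Set.indicator_apply, Set.mem_setOf_eq]
    rw [Finset.sum_boole, Finset.filter_filter]
  simp_rw [h1]
  rw [integral_finsetSum]
  · refine Finset.sum_congr rfl fun φ hφ => ?_
    rw [← aux_event_prob q hq1 F φ (by simpa [incMaps] using hφ), integral_indicator (hms _)]
    simp
  · intro φ _
    exact (integrable_const (1 : ℝ)).indicator (hms _)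

/-- Suppose the indegree distributions of Construction 1 satisfy
`D_n/n → ν` in distribution (here `q (n-1)` is the indegree distribution `ν_n` of the
`n`-th vertex, which has `n−1` predecessors). Then for every graph `F` on `{1,…,m}` and
every permutation `σ` of `{1,…,m}`,
`E[n_≤(F_σ, G_n)] / n^m → (1/m!) ∏_j M_{d_j(F_σ)}` where `M_d = ∫₀¹ x^d dν(x)`. -/
theorem stmt8 (ν : Measure ℝ) [IsProbabilityMeasure ν] (hν : ν (Set.Icc 0 1) = 1)
    (q : ℕ → ℕ → ℝ≥0∞)
    (hq1 : ∀ v : ℕ, ∑ d ∈ Finset.range (v + 1), q v d = 1)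
    (hq0 : ∀ v d : ℕ, v < d → q v d = 0)
    (hconv : ∀ f : BoundedContinuousFunction ℝ ℝ,
      Tendsto (fun k => ∑ d ∈ Finset.range k, (q (k - 1) d).toReal * f ((d : ℝ) / k))
        atTop (nhds (∫ x, f x ∂ν)))
    (m : ℕ) (F : SimpleGraph (Fin m)) (σ : Equiv.Perm (Fin m)) :
    Tendsto
      (fun n => (∫ ω, (incHomCount (relabel σ F) (graphOf ω) : ℝ) ∂(con1Measure n q))
        / (n : ℝ) ^ m)
      atTop
      (nhds ((1 / (Nat.factorial m : ℝ)) *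
        ∏ j : Fin m, ∫ x, x ^ (indeg (relabel σ F) j) ∂ν)) := by
  simp_rw [aux_integral q hq1]
  have hae : ∀ᵐ x ∂ν, x ∈ Set.Icc (0 : ℝ) 1 := by
    rw [← prob_compl_eq_zero_iff measurableSet_Icc] at hν
    exact measure_eq_zero_iff_ae_notMem.1 hν |>.mono fun x hx => by simpa using hx
  have hlim := fun d => auxP_tendsto ν hν q hq1 hconv d
  refine aux_limit m (fun j v => auxP q (indeg (relabel σ F) j) v) _ ?_ ?_ fun j => hlim _
  · intro j v
    rw [abs_of_nonneg (auxP_nonneg _ _ _)]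
    exact auxP_le q hq1 _ _
  · intro j
    rw [abs_le]
    exact ⟨by linarith [ge_of_tendsto' (hlim (indeg (relabel σ F) j)) (fun v => auxP_nonneg q _ v)],
      le_of_tendsto' (hlim _) (fun v => auxP_le q hq1 _ v)⟩
end

section
/- Let ν be a probability measure on [0,1], μ_ν = ν × λ on S = [0,1]², and W the kernel on S defined by W((s₁,t₁),(s₂,t₂)) = s₂ if t₁ < t₂, s₁ if t₁ > t₂, 0 if t₁ = t₂. Then for every finite simple graph F with vertex set {1,…,m}, the homomorphism density t(F,W) = ∫_{S^m} ∏_{{i,j}∈E(F)} W(x_i,x_j) dμ_ν(x₁)⋯dμ_ν(x_m) satisfies t(F,W) = (1/m!) Σ_σ ∏_{j=1}^m M_{d_j(F_σ)}, where the sum is over all permutations σ of {1,…,m}, d_j(F_σ) = #{i < j : {i,j} ∈ E(F_σ)}, and M_d = ∫₀¹ x^d dν(x). -/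
open MeasureTheory Filter
open scoped ENNReal

/-- The measure `μ_ν = ν × λ` on `S = [0,1]²`. -/
noncomputable def muNu (ν : Measure ℝ) : Measure (ℝ × ℝ) := ν.prod unif01

/-- `∏_{{i,j} ∈ E(F)} W(x_i, x_j)` (each edge counted once, via its ordered
representative `i < j`). -/
noncomputable def edgeProd {m : ℕ} {α : Type*} (F : SimpleGraph (Fin m))
    [DecidableRel F.Adj] (W : α → α → ℝ) (x : Fin m → α) : ℝ :=
  ∏ p ∈ Finset.univ.filter (fun p : Fin m × Fin m => p.1 < p.2 ∧ F.Adj p.1 p.2),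
    W (x p.1) (x p.2)

lemma aux_pt {m : ℕ} (F : SimpleGraph (Fin m)) [DecidableRel F.Adj] (σ : Equiv.Perm (Fin m))
    (x : Fin m → ℝ × ℝ) (hx : StrictMono (fun k => (x (σ.symm k)).2)) :
    edgeProd F Wker x = ∏ j, (x (σ.symm j)).1 ^ (indeg (relabel σ F) j) := by
  classical
  have h1 : ∀ j, (x (σ.symm j)).1 ^ (indeg (relabel σ F) j)
      = ∏ i, if i < j ∧ F.Adj (σ.symm i) (σ.symm j) then (x (σ.symm j)).1 else 1 := by
    intro j
    rw [Finset.prod_ite, Finset.prod_const, Finset.prod_const_one, mul_one]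
    congr 1
    unfold indeg
    rw [Nat.card_eq_fintype_card, Fintype.card_subtype]
    congr 1
    ext i
    rw [Finset.mem_filter, Finset.mem_filter]
    rfl
  simp_rw [h1]
  rw [Finset.prod_comm, ← Finset.prod_product', ← Finset.prod_filter]
  unfold edgeProd
  have hlt : ∀ a b, (x a).2 < (x b).2 ↔ σ a < σ b := by
    intro a b
    have := hx.lt_iff_lt (a := σ a) (b := σ b)
    simpa using this
  refine Finset.prod_bij' (fun p _ => if σ p.1 < σ p.2 then (σ p.1, σ p.2) else (σ p.2, σ p.1))
    (fun p _ => if σ.symm p.1 < σ.symm p.2 then (σ.symm p.1, σ.symm p.2)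
      else (σ.symm p.2, σ.symm p.1)) ?_ ?_ ?_ ?_ ?_
  · rintro ⟨a, b⟩ h
    simp only [Finset.mem_filter, Finset.mem_univ, true_and, Finset.univ_product_univ] at h ⊢
    split_ifs with h2
    · simpa using ⟨h2, h.2⟩
    · have : σ a ≠ σ b := fun h' => h.1.ne (σ.injective h')
      simpa using ⟨lt_of_le_of_ne (not_lt.mp h2) this.symm, h.2.symm⟩
  · rintro ⟨a, b⟩ h
    simp only [Finset.mem_filter, Finset.mem_univ, true_and, Finset.univ_product_univ] at h ⊢
    split_ifs with h2
    · simpa using ⟨h2, h.2⟩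
    · have : σ.symm a ≠ σ.symm b := fun h' => h.1.ne (σ.symm.injective h')
      simpa using ⟨lt_of_le_of_ne (not_lt.mp h2) this.symm, h.2.symm⟩
  · rintro ⟨a, b⟩ h
    simp only [Finset.mem_filter, Finset.mem_univ, true_and] at h
    by_cases h2 : σ a < σ b
    · simp [h2, h.1]
    · simp [h2, h.1.not_gt]
  · rintro ⟨a, b⟩ h
    simp only [Finset.mem_filter, Finset.mem_univ, true_and, Finset.univ_product_univ] at h
    by_cases h2 : σ.symm a < σ.symm b
    · simp [h2, h.1]
    · simp [h2, h.1.not_gt]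
  · rintro ⟨a, b⟩ h
    simp only [Finset.mem_filter, Finset.mem_univ, true_and] at h
    simp only [Wker, hlt]
    by_cases h2 : σ a < σ b
    · simp [h2]
    · have h3 : σ a ≠ σ b := fun h' => h.1.ne (σ.injective h')
      have h4 : σ b < σ a := lt_of_le_of_ne (not_lt.mp h2) h3.symm
      simp [h2, h4]

lemma aux_exists {m : ℕ} (t : Fin m → ℝ) (ht : Function.Injective t) :
    ∃ σ : Equiv.Perm (Fin m), StrictMono (fun k => t (σ.symm k)) ∧
      ∀ τ : Equiv.Perm (Fin m), StrictMono (fun k => t (τ.symm k)) → τ = σ := by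
  refine ⟨(Tuple.sort t).symm, ?_, ?_⟩
  · exact (Tuple.monotone_sort t).strictMono_of_injective (ht.comp (Equiv.injective _))
  · intro τ hτ
    have h := Tuple.unique_monotone (f := t) (σ := τ.symm) (τ := Tuple.sort t) hτ.monotone
      (Tuple.monotone_sort t)
    have h2 : τ.symm = Tuple.sort t := Equiv.ext fun i => ht (congrFun h i)
    rw [← h2, Equiv.symm_symm]

open Classical in
lemma aux_sum {m : ℕ} (t : Fin m → ℝ) (ht : Function.Injective t)
    (g : Equiv.Perm (Fin m) → ℝ) (c : ℝ)
    (h : ∀ σ : Equiv.Perm (Fin m), StrictMono (fun k => t (σ.symm k)) → g σ = c) :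
    ∑ σ : Equiv.Perm (Fin m), g σ * (if StrictMono (fun k => t (σ.symm k)) then 1 else 0) = c := by
  obtain ⟨σ, h1, h2⟩ := aux_exists t ht
  rw [Finset.sum_eq_single σ]
  · simp [h1, h σ h1]
  · intro τ _ hne
    rw [if_neg (fun h' => hne (h2 τ h')), mul_zero]
  · simp

instance inst_s10 : IsProbabilityMeasure unif01 := ⟨by simp [unif01]⟩

lemma aux_inj (m : ℕ) :
    ∀ᵐ t ∂(Measure.pi fun _ : Fin m => unif01), Function.Injective t := by
  have hp : (Measure.pi fun _ : Fin m => unif01)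
      = (volume : Measure (Fin m → ℝ)).restrict (Set.univ.pi fun _ => Set.Icc 0 1) := by
    unfold unif01
    rw [← Measure.restrict_pi_pi]; rfl
  rw [hp]
  apply ae_restrict_of_ae
  have : ∀ i j : Fin m, i ≠ j → ∀ᵐ t : Fin m → ℝ, t i ≠ t j := by
    intro i j hij
    have hs := Measure.addHaar_submodule (volume : Measure (Fin m → ℝ))
      (LinearMap.ker ((LinearMap.proj i : (Fin m → ℝ) →ₗ[ℝ] ℝ) - LinearMap.proj j)) (by
        intro h
        have : Pi.single i (1:ℝ) ∈ (⊤ : Submodule ℝ (Fin m → ℝ)) := trivial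
        rw [← h] at this
        simp [hij] at this)
    rw [ae_iff]
    convert hs using 2
    ext t
    simp [sub_eq_zero]
  have h2 : ∀ᵐ t : Fin m → ℝ, ∀ i j, i ≠ j → t i ≠ t j := by
    rw [ae_all_iff]; intro i
    rw [ae_all_iff]; intro j
    by_cases hij : i = j
    · simp [hij]
    · filter_upwards [this i j hij] with t ht _ using ht
  filter_upwards [h2] with t ht i j hij
  by_contra h
  exact ht i j h hij

lemma aux_meas {m : ℕ} (σ : Equiv.Perm (Fin m)) :
    MeasurableSet {t : Fin m → ℝ | StrictMono (fun k => t (σ.symm k))} := by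
  simp only [StrictMono, Set.ofPred_forall]
  refine MeasurableSet.iInter fun i => MeasurableSet.iInter fun j => MeasurableSet.iInter fun _ => ?_
  exact measurableSet_lt (measurable_pi_apply _) (measurable_pi_apply _)

open Classical in
lemma aux_int {m : ℕ} (σ : Equiv.Perm (Fin m)) :
    Integrable (fun t : Fin m → ℝ => if StrictMono (fun k => t (σ.symm k)) then (1:ℝ) else 0)
      (Measure.pi fun _ : Fin m => unif01) := by
  refine ((integrable_const (1:ℝ)).indicator (aux_meas σ)).congr (ae_of_all _ fun t => ?_)
  simp [Set.indicator_apply]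

open Classical in
lemma aux_const {m : ℕ} (σ : Equiv.Perm (Fin m)) :
    ∫ t : Fin m → ℝ, (if StrictMono (fun k => t (σ.symm k)) then (1:ℝ) else 0)
      ∂(Measure.pi fun _ : Fin m => unif01) = 1 / (Nat.factorial m : ℝ) := by
  have key : ∀ σ : Equiv.Perm (Fin m),
      ∫ t : Fin m → ℝ, (if StrictMono (fun k => t (σ.symm k)) then (1:ℝ) else 0)
      ∂(Measure.pi fun _ : Fin m => unif01)
      = ∫ t : Fin m → ℝ, (if StrictMono t then (1:ℝ) else 0)
      ∂(Measure.pi fun _ : Fin m => unif01) := by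
    intro σ
    have hfun : ∀ t : Fin m → ℝ, (MeasurableEquiv.piCongrLeft (fun _ : Fin m => ℝ) σ) t
        = fun k => t (σ.symm k) := by
      intro t
      funext k
      obtain ⟨i, rfl⟩ := σ.surjective k
      rw [MeasurableEquiv.coe_piCongrLeft, Equiv.piCongrLeft_apply_apply, Equiv.symm_apply_apply]
    simp_rw [← hfun]
    exact (measurePreserving_piCongrLeft (fun _ : Fin m => unif01) σ).integral_comp'
      (fun t : Fin m → ℝ => if StrictMono t then (1:ℝ) else 0)
  have hs : ∑ σ : Equiv.Perm (Fin m),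
      ∫ t : Fin m → ℝ, (if StrictMono (fun k => t (σ.symm k)) then (1:ℝ) else 0)
      ∂(Measure.pi fun _ : Fin m => unif01) = 1 := by
    rw [← integral_finsetSum _ (fun σ _ => aux_int σ)]
    have : (fun t : Fin m → ℝ => ∑ σ : Equiv.Perm (Fin m),
        (if StrictMono (fun k => t (σ.symm k)) then (1:ℝ) else 0))
        =ᵐ[Measure.pi fun _ : Fin m => unif01] fun _ => (1:ℝ) := by
      filter_upwards [aux_inj m] with t ht
      simpa using aux_sum t ht (fun _ => 1) 1 (fun _ _ => rfl)
    rw [integral_congr_ae this]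
    simp
  rw [Finset.sum_congr rfl (fun σ _ => (key σ).trans (key 1).symm.symm)] at hs
  rw [key σ]
  rw [Finset.sum_const, Finset.card_univ, Fintype.card_perm, Fintype.card_fin, nsmul_eq_mul] at hs
  rw [eq_div_iff (by positivity), mul_comm]
  simpa [key] using hs

lemma aux_pow (ν : Measure ℝ) [IsProbabilityMeasure ν] (hν : ν (Set.Icc 0 1) = 1) (d : ℕ) :
    Integrable (fun t : ℝ => t ^ d) ν := by
  have h : ∀ᵐ t ∂ν, t ∈ Set.Icc (0:ℝ) 1 := by
    rw [mem_ae_iff_prob_eq_one measurableSet_Icc |>.symm] at hν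
    exact hν
  refine Integrable.of_bound (C := 1) (by fun_prop) ?_
  filter_upwards [h] with t ht
  rw [Real.norm_of_nonneg (pow_nonneg ht.1 d)]
  exact pow_le_one₀ ht.1 ht.2

/-- For every finite simple graph `F` on `{1,…,m}`, the homomorphism
density of `F` in the kernel `W` on `(S, μ_ν)` equals
`(1/m!) Σ_σ ∏_{j=1}^m M_{d_j(F_σ)}`, with `M_d = ∫₀¹ x^d dν(x)`. -/
theorem stmt10 (ν : Measure ℝ) [IsProbabilityMeasure ν] (hν : ν (Set.Icc 0 1) = 1)
    (m : ℕ) (F : SimpleGraph (Fin m)) [DecidableRel F.Adj] :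
    ∫ x : Fin m → ℝ × ℝ, edgeProd F Wker x ∂(Measure.pi fun _ : Fin m => muNu ν)
      = (1 / (Nat.factorial m : ℝ)) *
          ∑ σ : Equiv.Perm (Fin m), ∏ j : Fin m, ∫ t, t ^ (indeg (relabel σ F) j) ∂ν := by
  classical
  have hmp := measurePreserving_arrowProdEquivProdArrow ℝ ℝ (Fin m) (fun _ => ν) (fun _ => unif01)
  have h0 : (Measure.pi fun _ : Fin m => muNu ν)
      = Measure.pi fun _ : Fin m => ν.prod unif01 := rfl
  have h1 : ∫ x : Fin m → ℝ × ℝ, edgeProd F Wker x ∂(Measure.pi fun _ : Fin m => muNu ν)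
      = ∫ y : (Fin m → ℝ) × (Fin m → ℝ), edgeProd F Wker (fun i => (y.1 i, y.2 i))
        ∂((Measure.pi fun _ : Fin m => ν).prod (Measure.pi fun _ : Fin m => unif01)) := by
    rw [h0, ← hmp.integral_comp']
    rfl
  have hreindex : ∀ (σ : Equiv.Perm (Fin m)) (s : Fin m → ℝ),
      ∏ j, s (σ.symm j) ^ (indeg (relabel σ F) j) = ∏ i, s i ^ (indeg (relabel σ F) (σ i)) := by
    intro σ s
    rw [← Equiv.prod_comp σ]
    simp
  have h2 : (fun y : (Fin m → ℝ) × (Fin m → ℝ) => edgeProd F Wker (fun i => (y.1 i, y.2 i)))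
      =ᵐ[(Measure.pi fun _ : Fin m => ν).prod (Measure.pi fun _ : Fin m => unif01)]
      fun y => ∑ σ : Equiv.Perm (Fin m), (∏ i, y.1 i ^ (indeg (relabel σ F) (σ i))) *
        (if StrictMono (fun k => y.2 (σ.symm k)) then 1 else 0) := by
    have hinj := (Measure.quasiMeasurePreserving_snd
      (μ := Measure.pi fun _ : Fin m => ν) (ν := Measure.pi fun _ : Fin m => unif01)).ae (aux_inj m)
    filter_upwards [hinj] with y hy
    symm
    apply aux_sum y.2 hy (fun σ => ∏ i, y.1 i ^ (indeg (relabel σ F) (σ i)))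
    intro σ hσ
    rw [aux_pt F σ (fun i => (y.1 i, y.2 i)) hσ, ← hreindex]
  rw [h1, integral_congr_ae h2, integral_finsetSum, Finset.mul_sum]
  · refine Finset.sum_congr rfl fun σ _ => ?_
    rw [integral_prod_mul (fun s : Fin m → ℝ => ∏ i, s i ^ (indeg (relabel σ F) (σ i)))
      (fun t : Fin m → ℝ => if StrictMono (fun k => t (σ.symm k)) then (1:ℝ) else 0),
      aux_const, mul_comm,
      integral_fintype_prod_eq_prod (fun i (t : ℝ) => t ^ (indeg (relabel σ F) (σ i))),
      Equiv.prod_comp σ (fun j => ∫ t, t ^ (indeg (relabel σ F) j) ∂ν)]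
  · intro σ _
    refine Integrable.mul_prod (f := fun s : Fin m → ℝ => ∏ i, s i ^ (indeg (relabel σ F) (σ i)))
      ?_ (aux_int σ)
    exact Integrable.fintype_prod (f := fun i (t : ℝ) => t ^ (indeg (relabel σ F) (σ i)))
      (fun i => aux_pow ν hν _)
end

section
/- Let ν be a probability measure on [0,1] and let G_n, n ≥ 1, be the random graphs of Construction 2. Then for every finite simple graph F with vertex set {1,…,m}, t(F, G_n) → t(F,W) in probability as n → ∞, where t(F,W) = ∫_{S^m} ∏_{{i,j}∈E(F)} W(x_i,x_j) dμ_ν(x₁)⋯dμ_ν(x_m) is the homomorphism density of F in the kernel W on (S, μ_ν). -/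
open MeasureTheory Filter
open scoped ENNReal

/-- The Construction 2 graph `G_n`: for `i < j`, the edge `{i,j}` is present iff
`U_{ij} < θ_j`. -/
def con2Graph {n : ℕ} (ω : (Fin n → ℝ) × (Fin n × Fin n → ℝ)) : SimpleGraph (Fin n) where
  Adj i j := (i < j ∧ ω.2 (i, j) < ω.1 j) ∨ (j < i ∧ ω.2 (j, i) < ω.1 i)
  symm := ⟨fun _ _ h => h.symm⟩
  loopless := ⟨fun i h => by rcases h with ⟨h, -⟩ | ⟨h, -⟩ <;> exact absurd h (lt_irrefl i)⟩

/-- `n(F,G)`: the number of homomorphisms `F → G`. -/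
noncomputable def homCount {m n : ℕ} (F : SimpleGraph (Fin m)) (G : SimpleGraph (Fin n)) : ℕ :=
  Nat.card {φ : Fin m → Fin n // ∀ i j, F.Adj i j → G.Adj (φ i) (φ j)}

namespace Con2

set_option autoImplicit false

instance : IsProbabilityMeasure unif01 := ⟨by simp [unif01]⟩

lemma mp_inj {ι κ : Type*} [Fintype ι] [Fintype κ] (μ : Measure ℝ) [IsProbabilityMeasure μ]
    (g : ι → κ) (hg : g.Injective) :
    MeasurePreserving (fun (ω : κ → ℝ) i => ω (g i)) (Measure.pi fun _ => μ)
      (Measure.pi fun _ => μ) := by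
  refine ⟨by fun_prop, ?_⟩
  have h := ProbabilityTheory.iIndepFun_pi (μ := fun _ : κ => μ) (X := fun _ => id)
    (fun _ => aemeasurable_id)
  have h2 := h.precomp hg
  have h3 := (ProbabilityTheory.iIndepFun_iff_map_fun_eq_pi_map
    (fun i => (measurable_pi_apply (g i)).aemeasurable)).1 h2
  change Measure.map (fun (ω : κ → ℝ) i => ω (g i)) _ = _ at h3
  rw [h3]
  congr 1
  funext i
  exact (measurePreserving_eval (fun _ : κ => μ) (g i)).map_eq

lemma ae_inj {V : Type*} [Fintype V] :
    ∀ᵐ t ∂(Measure.pi fun _ : V => unif01), Function.Injective t := by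
  have key : ∀ v w : V, v ≠ w → ∀ᵐ t ∂(Measure.pi fun _ : V => unif01), t v ≠ t w := by
    intro v w hvw
    have hac : (Measure.pi fun _ : V => unif01) ≪ (volume : Measure (V → ℝ)) := by
      have := Measure.restrict_pi_pi (fun _ : V => (volume : Measure ℝ))
        (fun _ => Set.Icc (0:ℝ) 1)
      unfold unif01
      rw [← this]
      exact Measure.absolutelyContinuous_of_le Measure.restrict_le_self
    apply hac.ae_le
    let S : Submodule ℝ (V → ℝ) := LinearMap.ker
      ((LinearMap.proj v : (V → ℝ) →ₗ[ℝ] ℝ) - LinearMap.proj w)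
    have hS : S ≠ ⊤ := by
      classical
      intro h
      have : (Pi.single v 1 : V → ℝ) ∈ S := by rw [h]; trivial
      simp [S, hvw.symm] at this
    have := Measure.addHaar_submodule (volume : Measure (V → ℝ)) S hS
    change ∀ᵐ t : V → ℝ ∂volume, t v ≠ t w
    rw [ae_iff]
    refine measure_mono_null ?_ this
    intro t ht
    simp [S] at ht ⊢
    linarith
  have : ∀ᵐ t ∂(Measure.pi fun _ : V => unif01), ∀ v w : V, v ≠ w → t v ≠ t w := by
    rw [ae_all_iff]; intro v; rw [ae_all_iff]; intro w
    by_cases h : v = w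
    · simp [h]
    · filter_upwards [key v w h] with t ht _ using ht
  filter_upwards [this] with t ht v w hvw
  by_contra hne
  exact ht v w hne hvw

lemma unif_Ico : unif01 = volume.restrict (Set.Ico (0 : ℝ) 1) :=
  (Measure.restrict_congr_set Ico_ae_eq_Icc).symm

lemma ae_mem (μ : Measure ℝ) [IsProbabilityMeasure μ] (s : Set ℝ) (hs : ∀ᵐ x ∂μ, x ∈ s)
    {V : Type*} [Fintype V] : ∀ᵐ t ∂(Measure.pi fun _ : V => μ), ∀ v, t v ∈ s := by
  rw [ae_all_iff]; intro v
  exact (Measure.quasiMeasurePreserving_eval (fun _ : V => μ) v).ae hs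

lemma ae_Ico : ∀ᵐ x ∂unif01, x ∈ Set.Ico (0:ℝ) 1 := by
  rw [unif_Ico]; exact ae_restrict_mem measurableSet_Ico

lemma int_ind (θ : ℝ) (h : θ ∈ Set.Icc (0:ℝ) 1) :
    ∫ u, (if u < θ then (1:ℝ) else 0) ∂unif01 = θ := by
  have : (fun u => if u < θ then (1:ℝ) else 0) = (Set.Iio θ).indicator 1 := by
    funext u; simp [Set.indicator]
  rw [this, integral_indicator_one measurableSet_Iio, unif_Ico, measureReal_restrict_apply
    measurableSet_Iio]
  have : Set.Iio θ ∩ Set.Ico 0 1 = Set.Ico 0 θ := by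
    ext x; simp; constructor
    · rintro ⟨a, b, c⟩; exact ⟨b, a⟩
    · rintro ⟨a, b⟩; exact ⟨b, a, by linarith [h.2]⟩
  rw [this]; simp [h.1]

/-- discretisation -/
noncomputable def disc (n : ℕ) (t : ℝ) : Fin (n+1) := Fin.ofNat (n+1) ⌊((n:ℝ)+1) * t⌋₊

lemma disc_meas (n : ℕ) : Measurable (disc n) := by
  unfold disc
  exact (measurable_from_top (f := fun k : ℕ => Fin.ofNat (n+1) k)).comp
    (Nat.measurable_floor.comp (by fun_prop))

lemma disc_val (n : ℕ) {t : ℝ} (h : t ∈ Set.Ico (0:ℝ) 1) :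
    (disc n t : ℕ) = ⌊((n:ℝ)+1) * t⌋₊ := by
  simp only [disc, Fin.ofNat]
  apply Nat.mod_eq_of_lt
  have hn : (0:ℝ) < n + 1 := by positivity
  rw [Nat.floor_lt (mul_nonneg hn.le h.1)]
  push_cast
  nlinarith [h.2]

lemma disc_meas_real (n : ℕ) (k : Fin (n+1)) :
    unif01 (disc n ⁻¹' {k}) = ENNReal.ofReal (1 / ((n:ℝ)+1)) := by
  have hn : (0:ℝ) < n + 1 := by positivity
  rw [unif_Ico, Measure.restrict_apply (disc_meas n (measurableSet_singleton k))]
  have : disc n ⁻¹' {k} ∩ Set.Ico 0 1 = Set.Ico ((k:ℝ)/(n+1)) (((k:ℝ)+1)/(n+1)) := by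
    ext x
    have e : x ∈ Set.Ico (0:ℝ) 1 → (disc n x = k ↔ x ∈ Set.Ico ((k:ℝ)/(n+1)) (((k:ℝ)+1)/(n+1))) := by
      intro hx
      rw [Fin.ext_iff, disc_val n hx, Nat.floor_eq_iff (mul_nonneg hn.le hx.1), Set.mem_Ico,
        div_le_iff₀ hn, lt_div_iff₀ hn, mul_comm]
    constructor
    · rintro ⟨h1, h2⟩; exact (e h2).1 h1
    · intro h
      have hx : x ∈ Set.Ico (0:ℝ) 1 := by
        refine ⟨le_trans (by positivity) h.1, lt_of_lt_of_le h.2 ?_⟩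
        rw [div_le_one hn]
        have := k.2
        have : (k:ℕ) + 1 ≤ n + 1 := k.2
        exact_mod_cast this
      exact ⟨(e hx).2 h, hx⟩
  rw [this, Real.volume_Ico]
  congr 1
  field_simp
  ring

lemma int_disc {V : Type*} [Fintype V] [DecidableEq V] (n : ℕ) (g : (V → Fin (n+1)) → ℝ) :
    ∫ t : V → ℝ, g (fun v => disc n (t v)) ∂(Measure.pi fun _ => unif01) =
      (∑ φ, g φ) / ((n:ℝ)+1) ^ Fintype.card V := by
  have hm : Measurable (fun (t : V → ℝ) v => disc n (t v)) :=
    measurable_pi_lambda _ fun v => (disc_meas n).comp (measurable_pi_apply v)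
  rw [← integral_map (φ := fun (t : V → ℝ) v => disc n (t v)) (f := g) hm.aemeasurable
    (Measurable.of_discrete).aestronglyMeasurable]
  have : IsProbabilityMeasure (Measure.map (fun (t : V → ℝ) v => disc n (t v))
    (Measure.pi fun _ => unif01)) := Measure.isProbabilityMeasure_map hm.aemeasurable
  rw [integral_fintype (Integrable.of_finite), Finset.sum_div]
  refine Finset.sum_congr rfl fun φ _ => ?_
  have : (Measure.map (fun (t : V → ℝ) v => disc n (t v))
    (Measure.pi fun _ => unif01)).real {φ} = 1 / ((n:ℝ)+1) ^ Fintype.card V := by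
    rw [measureReal_def, Measure.map_apply hm (measurableSet_singleton _)]
    have : (fun (t : V → ℝ) v => disc n (t v)) ⁻¹' {φ} =
      Set.univ.pi (fun v => disc n ⁻¹' {φ v}) := by
      ext t; simp [funext_iff]
    rw [this, Measure.pi_pi]
    simp only [disc_meas_real, ENNReal.toReal_prod]
    rw [Finset.prod_const, ENNReal.toReal_ofReal (by positivity)]
    simp
  rw [this]; simp; ring

lemma disc_lt {s t : ℝ} (hs : s ∈ Set.Ico (0:ℝ) 1) (ht : t ∈ Set.Ico (0:ℝ) 1) (h : s < t) :
    ∀ᶠ n : ℕ in atTop, disc n s < disc n t := by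
  obtain ⟨N, hN⟩ := exists_nat_gt (1 / (t - s))
  filter_upwards [eventually_ge_atTop N] with n hn
  rw [Fin.lt_def, disc_val n hs, disc_val n ht]
  have hn' : (N:ℝ) ≤ n := by exact_mod_cast hn
  have h1 : 1 < ((n:ℝ)+1) * (t - s) := by
    rw [← div_lt_iff₀ (by linarith)]; linarith
  rw [Nat.lt_iff_add_one_le, Nat.le_floor_iff (mul_nonneg (by positivity) ht.1)]
  push_cast
  have := Nat.floor_le (a := ((n:ℝ)+1) * s) (mul_nonneg (by positivity) hs.1)
  linarith

lemma disc_ord {V : Type*} [Fintype V] (t : V → ℝ)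
    (ht : ∀ v, t v ∈ Set.Ico (0:ℝ) 1) :
    ∀ᶠ n : ℕ in atTop, ∀ v w, (disc n (t v) < disc n (t w) ↔ t v < t w) := by
  have : ∀ᶠ n : ℕ in atTop, ∀ v w, t v < t w → disc n (t v) < disc n (t w) := by
    rw [eventually_all]; intro v; rw [eventually_all]; intro w
    by_cases h : t v < t w
    · filter_upwards [disc_lt (ht v) (ht w) h] with n hn _ using hn
    · simp [h]
  filter_upwards [this] with n hn v w
  refine ⟨fun h => ?_, hn v w⟩
  rcases lt_trichotomy (t v) (t w) with h1 | h1 | h1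
  · exact h1
  · rw [h1] at h; exact absurd h (lt_irrefl _)
  · exact absurd (hn w v h1) (not_lt.2 h.le)

open Classical in
/-- edge indicator -/
noncomputable def adjI {n : ℕ} (ω : (Fin n → ℝ) × (Fin n × Fin n → ℝ)) (i j : Fin n) : ℝ :=
  if (con2Graph ω).Adj i j then 1 else 0

lemma adjI_eq {n : ℕ} (ω : (Fin n → ℝ) × (Fin n × Fin n → ℝ)) (i j : Fin n) (h : i ≠ j) :
    adjI ω i j = if ω.2 (min i j, max i j) < ω.1 (if i < j then j else i) then 1 else 0 := by
  unfold adjI con2Graph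
  rcases lt_or_gt_of_ne h with h | h
  · simp [h, h.le, not_lt.2 h.le]
  · simp [h, h.le, not_lt.2 h.le]

lemma adjI_meas {n : ℕ} (i j : Fin n) :
    Measurable (fun ω : (Fin n → ℝ) × (Fin n × Fin n → ℝ) => adjI ω i j) := by
  by_cases h : i = j
  · subst h
    have : (fun ω : (Fin n → ℝ) × (Fin n × Fin n → ℝ) => adjI ω i i) = fun _ => 0 := by
      funext ω; simp [adjI]
    rw [this]; exact measurable_const
  · simp only [adjI_eq _ i j h]
    refine Measurable.ite ?_ measurable_const measurable_const
    exact measurableSet_lt (by fun_prop) (by fun_prop)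

lemma adjI_nonneg {n : ℕ} (ω : (Fin n → ℝ) × (Fin n × Fin n → ℝ)) (i j : Fin n) :
    0 ≤ adjI ω i j := by unfold adjI; split_ifs <;> norm_num

lemma adjI_le {n : ℕ} (ω : (Fin n → ℝ) × (Fin n × Fin n → ℝ)) (i j : Fin n) :
    adjI ω i j ≤ 1 := by unfold adjI; split_ifs <;> norm_num

instance (n : ℕ) (ν : Measure ℝ) [IsProbabilityMeasure ν] :
    IsProbabilityMeasure (con2Measure n ν) := by unfold con2Measure; infer_instance

instance (ν : Measure ℝ) [IsProbabilityMeasure ν] :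
    IsProbabilityMeasure (muNu ν) := by unfold muNu; infer_instance

section
variable {V ι : Type*} [Fintype V] [DecidableEq V] [Fintype ι] (a b : ι → V)

/-- indicator of a homomorphism -/
noncomputable def homI {n : ℕ} (φ : V → Fin n) (ω : (Fin n → ℝ) × (Fin n × Fin n → ℝ)) : ℝ :=
  ∏ e, adjI ω (φ (a e)) (φ (b e))

lemma homI_meas {n : ℕ} (φ : V → Fin n) : Measurable (homI a b φ) := by
  unfold homI
  exact Finset.measurable_fun_prod _ fun e _ => adjI_meas _ _

lemma homI_nonneg {n : ℕ} (φ : V → Fin n) (ω) : 0 ≤ homI a b φ ω :=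
  Finset.prod_nonneg fun _ _ => adjI_nonneg _ _ _

lemma homI_le {n : ℕ} (φ : V → Fin n) (ω) : homI a b φ ω ≤ 1 :=
  Finset.prod_le_one (fun _ _ => adjI_nonneg _ _ _) fun _ _ => adjI_le _ _ _

lemma homI_int (ν : Measure ℝ) [IsProbabilityMeasure ν] {n : ℕ} (φ : V → Fin n) :
    Integrable (homI a b φ) (con2Measure n ν) := by
  refine Integrable.of_bound (homI_meas a b φ).aestronglyMeasurable 1 (ae_of_all _ fun ω => ?_)
  rw [Real.norm_of_nonneg (homI_nonneg ..)]; exact homI_le ..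

lemma int_homI (ν : Measure ℝ) [IsProbabilityMeasure ν] (hν : ∀ᵐ x ∂ν, x ∈ Set.Icc (0:ℝ) 1)
    (hab : ∀ e, a e ≠ b e) (hinj : ∀ e e', s(a e, b e) = s(a e', b e') → e = e')
    {n : ℕ} (φ : V → Fin n) (hφ : Function.Injective φ) :
    ∫ ω, homI a b φ ω ∂(con2Measure n ν) =
      ∫ s : V → ℝ, ∏ e, s (if φ (a e) < φ (b e) then b e else a e) ∂(Measure.pi fun _ => ν) := by
  have h0 := homI_int a b ν φ
  unfold con2Measure at h0 ⊢
  rw [integral_prod _ h0]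
  rw [← (mp_inj ν φ hφ).map_eq, integral_map (mp_inj ν φ hφ).measurable.aemeasurable
    (Finset.measurable_fun_prod _ fun e _ => by fun_prop).aestronglyMeasurable]
  refine integral_congr_ae ?_
  filter_upwards [ae_mem ν _ hν (V := Fin n)] with θ hθ
  let κ : ι → Fin n × Fin n := fun e => (min (φ (a e)) (φ (b e)), max (φ (a e)) (φ (b e)))
  have hκ : Function.Injective κ := by
    intro e e' h
    apply hinj
    simp only [κ, Prod.mk.injEq] at h
    have h3 : s(φ (a e), φ (b e)) = s(φ (a e'), φ (b e')) := by
      rw [Sym2.eq_iff]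
      rcases le_total (φ (a e)) (φ (b e)) with h1 | h1 <;>
      rcases le_total (φ (a e')) (φ (b e')) with h2 | h2 <;>
      simp [h1, h2] at h <;> simp [h]
    rw [Sym2.eq_iff] at h3 ⊢
    simpa only [hφ.eq_iff] using h3
  have h1 : ∀ U, homI a b φ (θ, U) =
      (fun u : ι → ℝ => ∏ e, (fun e x => if x < θ (if φ (a e) < φ (b e) then φ (b e) else φ (a e))
        then (1:ℝ) else 0) e (u e)) (fun e => U (κ e)) := by
    intro U
    simp only [homI]
    refine Finset.prod_congr rfl fun e _ => ?_
    rw [adjI_eq _ _ _ (fun h => hab e (hφ h))]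
  simp only [h1]
  rw [← integral_map (μ := Measure.pi fun _ : Fin n × Fin n => unif01)
    (φ := fun (U : Fin n × Fin n → ℝ) e => U (κ e)) (f := fun u : ι → ℝ => ∏ e, (fun e x => if x < θ (if φ (a e) < φ (b e) then φ (b e) else φ (a e))
        then (1:ℝ) else 0) e (u e)) (mp_inj unif01 κ hκ).measurable.aemeasurable
    (Measurable.aestronglyMeasurable <| Finset.measurable_fun_prod _ fun e _ => 
      Measurable.ite (measurableSet_lt (by fun_prop) (by fun_prop)) measurable_const measurable_const),
    (mp_inj unif01 κ hκ).map_eq, integral_fintype_prod_eq_prod (μ := fun _ : ι => unif01) (fun (e : ι) (x : ℝ) => if x < θ (if φ (a e) < φ (b e) then φ (b e) else φ (a e))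
        then (1:ℝ) else 0)]
  refine Finset.prod_congr rfl fun e _ => ?_
  rw [int_ind _ (hθ _)]
  split_ifs <;> rfl

/-- kernel density -/
noncomputable def dens (ν : Measure ℝ) : ℝ :=
  ∫ x : V → ℝ × ℝ, ∏ e, Wker (x (a e)) (x (b e)) ∂(Measure.pi fun _ => muNu ν)

lemma W_meas : Measurable (Function.uncurry Wker) := by
  unfold Wker Function.uncurry
  refine Measurable.ite (measurableSet_lt (by fun_prop) (by fun_prop)) (by fun_prop) ?_
  exact Measurable.ite (measurableSet_lt (by fun_prop) (by fun_prop)) (by fun_prop) (by fun_prop)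

lemma dens_eq (ν : Measure ℝ) [IsProbabilityMeasure ν] (hν : ∀ᵐ x ∂ν, x ∈ Set.Icc (0:ℝ) 1)
    (hab : ∀ e, a e ≠ b e) :
    dens a b ν = ∫ t : V → ℝ, ∫ s : V → ℝ, ∏ e, s (if t (a e) < t (b e) then b e else a e)
      ∂(Measure.pi fun _ => ν) ∂(Measure.pi fun _ => unif01) := by
  unfold dens muNu
  have hmp := measurePreserving_arrowProdEquivProdArrow ℝ ℝ V (fun _ => ν) (fun _ => unif01)
  let f : (V → ℝ) × (V → ℝ) → ℝ := fun z =>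
    ∏ e, Wker (z.1 (a e), z.2 (a e)) (z.1 (b e), z.2 (b e))
  have h1 := hmp.integral_comp' f
  have h2 : (fun x : V → ℝ × ℝ => ∏ e, Wker (x (a e)) (x (b e))) =
    fun x => f ((MeasurableEquiv.arrowProdEquivProdArrow ℝ ℝ V) x) := rfl
  rw [h2, h1]
  have hfm : Measurable f := Finset.measurable_fun_prod _ fun e _ => 
    W_meas.comp (f := fun z : (V → ℝ) × (V → ℝ) => ((z.1 (a e), z.2 (a e)), (z.1 (b e), z.2 (b e))))
      (by fun_prop)
  have hfi : Integrable f ((Measure.pi fun _ => ν).prod (Measure.pi fun _ => unif01)) := by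
    refine Integrable.of_bound hfm.aestronglyMeasurable 1 ?_
    have := Measure.quasiMeasurePreserving_fst (μ := Measure.pi fun _ : V => ν)
      (ν := Measure.pi fun _ : V => unif01) |>.ae (ae_mem ν _ hν (V := V))
    filter_upwards [this] with z hz
    rw [Real.norm_eq_abs, Finset.abs_prod]
    refine Finset.prod_le_one (fun _ _ => abs_nonneg _) fun e _ => ?_
    have h1 := hz (a e)
    have h2 := hz (b e)
    unfold Wker
    dsimp only
    split_ifs
    · rw [abs_of_nonneg h2.1]; exact h2.2
    · rw [abs_of_nonneg h1.1]; exact h1.2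
    · simp
  rw [integral_prod_symm _ hfi]
  refine integral_congr_ae ?_
  filter_upwards [ae_inj (V := V)] with t ht
  refine integral_congr_ae (ae_of_all _ fun s => ?_)
  refine Finset.prod_congr rfl fun e _ => ?_
  unfold Wker
  dsimp only
  rcases lt_trichotomy (t (a e)) (t (b e)) with h | h | h
  · simp [h]
  · exact absurd (ht h) (hab e)
  · simp [h, not_lt.2 h.le]

lemma first_moment (ν : Measure ℝ) [IsProbabilityMeasure ν] (hν : ∀ᵐ x ∂ν, x ∈ Set.Icc (0:ℝ) 1)
    (hab : ∀ e, a e ≠ b e) (hinj : ∀ e e', s(a e, b e) = s(a e', b e') → e = e') :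
    Tendsto (fun n : ℕ => ∫ ω, (∑ φ : V → Fin (n+1), homI a b φ ω) / ((n:ℝ)+1) ^ Fintype.card V
      ∂(con2Measure (n+1) ν)) atTop (nhds (dens a b ν)) := by
  have h1 : ∀ n : ℕ, ∫ ω, (∑ φ : V → Fin (n+1), homI a b φ ω) / ((n:ℝ)+1) ^ Fintype.card V
      ∂(con2Measure (n+1) ν) = ∫ t : V → ℝ, (fun φ : V → Fin (n+1) => ∫ ω, homI a b φ ω
        ∂(con2Measure (n+1) ν)) (fun v => disc n (t v)) ∂(Measure.pi fun _ => unif01) := by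
    intro n
    rw [int_disc n (fun φ : V → Fin (n+1) => ∫ ω, homI a b φ ω
        ∂(con2Measure (n+1) ν)), integral_div, integral_finsetSum _ fun φ _ => homI_int a b ν φ]
  simp only [h1]
  rw [dens_eq a b ν hν hab]
  refine tendsto_integral_of_dominated_convergence (fun _ => 1) ?_ (integrable_const _) ?_ ?_
  · intro n
    have hm : Measurable (fun (t : V → ℝ) v => disc n (t v)) :=
      measurable_pi_lambda _ fun v => (disc_meas n).comp (measurable_pi_apply v)
    exact ((Measurable.of_discrete (f := fun φ : V → Fin (n+1) => ∫ ω, homI a b φ ω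
        ∂(con2Measure (n+1) ν))).comp hm).aestronglyMeasurable
  · intro n
    refine ae_of_all _ fun t => ?_
    rw [Real.norm_of_nonneg (integral_nonneg fun ω => homI_nonneg ..)]
    calc _ ≤ ∫ ω, (1:ℝ) ∂(con2Measure (n+1) ν) :=
          integral_mono (homI_int ..) (integrable_const _) fun ω => homI_le ..
      _ = 1 := by simp
  · filter_upwards [ae_inj (V := V), ae_mem unif01 _ ae_Ico (V := V)] with t hti htm
    refine Tendsto.congr' ?_ tendsto_const_nhds
    filter_upwards [disc_ord t htm] with n hn
    have hφ : Function.Injective (fun v => disc n (t v)) := by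
      intro v w hvw
      apply hti
      have h1 := hn v w
      have h2 := hn w v
      simp only at hvw
      rw [hvw] at h1 h2
      simp at h1 h2
      exact le_antisymm h2 h1
    rw [int_homI a b ν hν hab hinj _ hφ]
    simp only [hn]

lemma dens_double (ν : Measure ℝ) [IsProbabilityMeasure ν] :
    dens (Sum.map a a) (Sum.map b b) ν = dens a b ν ^ 2 := by
  unfold dens
  have hmp := measurePreserving_sumPiEquivProdPi (ι := V) (ι' := V) (X := fun _ => ℝ × ℝ)
    (fun _ => muNu ν)
  have h := hmp.integral_comp' (fun z : (V → ℝ × ℝ) × (V → ℝ × ℝ) =>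
    (∏ e, Wker (z.1 (a e)) (z.1 (b e))) * (∏ e, Wker (z.2 (a e)) (z.2 (b e))))
  rw [integral_prod_mul (fun z : V → ℝ × ℝ => ∏ e, Wker (z (a e)) (z (b e)))
    (fun z : V → ℝ × ℝ => ∏ e, Wker (z (a e)) (z (b e)))] at h
  rw [sq, ← h]
  refine integral_congr_ae (ae_of_all _ fun x => ?_)
  simp only [Fintype.prod_sum_type]
  rfl

lemma sum_double {n : ℕ} (ω : (Fin n → ℝ) × (Fin n × Fin n → ℝ)) :
    ∑ φ : V ⊕ V → Fin n, homI (Sum.map a a) (Sum.map b b) φ ω = (∑ φ, homI a b φ ω) ^ 2 := by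
  rw [sq, Finset.sum_mul_sum, ← Finset.sum_product', Finset.univ_product_univ]
  refine Fintype.sum_equiv (Equiv.sumArrowEquivProdArrow V V (Fin n)) _ _ fun φ => ?_
  simp only [homI, Fintype.prod_sum_type]
  rfl

lemma hinj_double (hinj : ∀ e e', s(a e, b e) = s(a e', b e') → e = e') :
    ∀ e e' : ι ⊕ ι, s(Sum.map a a e, Sum.map b b e) = s(Sum.map a a e', Sum.map b b e') →
      e = e' := by
  rintro (e | e) (e' | e') h <;> simp at h <;> 
  · congr 1; apply hinj; rw [Sym2.eq_iff]; exact h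

lemma second_moment (ν : Measure ℝ) [IsProbabilityMeasure ν] (hν : ∀ᵐ x ∂ν, x ∈ Set.Icc (0:ℝ) 1)
    (hab : ∀ e, a e ≠ b e) (hinj : ∀ e e', s(a e, b e) = s(a e', b e') → e = e') :
    Tendsto (fun n : ℕ => ∫ ω, ((∑ φ : V → Fin (n+1), homI a b φ ω) / ((n:ℝ)+1) ^ Fintype.card V)
      ^ 2 ∂(con2Measure (n+1) ν)) atTop (nhds (dens a b ν ^ 2)) := by
  have h := first_moment (Sum.map a a) (Sum.map b b) ν hν
    (by rintro (e | e) <;> simp [hab]) (hinj_double a b hinj)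
  rw [dens_double] at h
  simp only [sum_double] at h
  refine h.congr fun n => ?_
  congr 1
  funext ω
  rw [div_pow, ← pow_mul, Fintype.card_sum, mul_two]

lemma conv (ν : Measure ℝ) [IsProbabilityMeasure ν] (hν : ∀ᵐ x ∂ν, x ∈ Set.Icc (0:ℝ) 1)
    (hab : ∀ e, a e ≠ b e) (hinj : ∀ e e', s(a e, b e) = s(a e', b e') → e = e')
    (ε : ℝ) (hε : 0 < ε) :
    Tendsto (fun n : ℕ => con2Measure (n+1) ν {ω | ε ≤ |(∑ φ : V → Fin (n+1), homI a b φ ω) /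
      ((n:ℝ)+1) ^ Fintype.card V - dens a b ν|}) atTop (nhds 0) := by
  have m1 := first_moment a b ν hν hab hinj
  have m2 := second_moment a b ν hν hab hinj
  set τ := dens a b ν with hτ
  let X : (n : ℕ) → (Fin (n+1) → ℝ) × (Fin (n+1) × Fin (n+1) → ℝ) → ℝ := fun n ω =>
    (∑ φ : V → Fin (n+1), homI a b φ ω) / ((n:ℝ)+1) ^ Fintype.card V
  have hXm : ∀ n, Measurable (X n) := fun n =>
    (Finset.measurable_fun_sum _ fun φ _ => homI_meas a b φ).div_const _
  have hX0 : ∀ n ω, 0 ≤ X n ω := fun n ω =>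
    div_nonneg (Finset.sum_nonneg fun φ _ => homI_nonneg ..) (by positivity)
  have hX1 : ∀ n ω, X n ω ≤ 1 := by
    intro n ω
    refine div_le_one_of_le₀ ?_ (by positivity)
    calc _ ≤ ∑ φ : V → Fin (n+1), (1:ℝ) := Finset.sum_le_sum fun φ _ => homI_le ..
      _ = _ := by simp
  have hXi : ∀ n, Integrable (X n) (con2Measure (n+1) ν) := fun n =>
    Integrable.of_bound (hXm n).aestronglyMeasurable 1 (ae_of_all _ fun ω => by
      rw [Real.norm_of_nonneg (hX0 n ω)]; exact hX1 n ω)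
  have hXi2 : ∀ n, Integrable (fun ω => X n ω ^ 2) (con2Measure (n+1) ν) := fun n =>
    Integrable.of_bound ((hXm n).pow_const 2).aestronglyMeasurable 1 (ae_of_all _ fun ω => by
      rw [Real.norm_of_nonneg (sq_nonneg _)]; exact pow_le_one₀ (hX0 n ω) (hX1 n ω))
  have hv : ∀ n, ∫ ω, (X n ω - τ) ^ 2 ∂(con2Measure (n+1) ν) =
      ∫ ω, X n ω ^ 2 ∂(con2Measure (n+1) ν) - 2 * τ * ∫ ω, X n ω ∂(con2Measure (n+1) ν) + τ ^ 2 := by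
    intro n
    have : ∀ ω, (X n ω - τ) ^ 2 = X n ω ^ 2 - 2 * τ * X n ω + τ ^ 2 := fun ω => by ring
    simp only [this]
    have hs : Integrable (fun ω => X n ω ^ 2 - 2 * τ * X n ω) (con2Measure (n+1) ν) :=
      (hXi2 n).sub ((hXi n).const_mul _)
    rw [integral_add hs (integrable_const _),
      integral_sub (hXi2 n) ((hXi n).const_mul _), integral_const_mul]
    simp
  have hvt : Tendsto (fun n => (∫ ω, (X n ω - τ) ^ 2 ∂(con2Measure (n+1) ν)) / ε ^ 2) atTop
      (nhds 0) := by
    simp only [hv]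
    have := (((m2.sub (m1.const_mul (2 * τ))).add_const (τ ^ 2)).div_const (ε ^ 2))
    convert this using 2
    ring
  have hvi : ∀ n, Integrable (fun ω => (X n ω - τ) ^ 2) (con2Measure (n+1) ν) := fun n => by
    have : ∀ ω, (X n ω - τ) ^ 2 = X n ω ^ 2 - 2 * τ * X n ω + τ ^ 2 := fun ω => by ring
    simp only [this]
    exact ((hXi2 n).sub ((hXi n).const_mul _)).add (integrable_const _)
  have hreal : Tendsto (fun n : ℕ => (con2Measure (n+1) ν).real {ω | ε ≤ |X n ω - τ|}) atTop
      (nhds 0) := by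
    refine squeeze_zero (fun n => measureReal_nonneg) (fun n => ?_) hvt
    rw [le_div_iff₀ (by positivity), mul_comm]
    have h := mul_meas_ge_le_integral_of_nonneg (ae_of_all _ fun ω => sq_nonneg (X n ω - τ))
      (hvi n) (ε ^ 2)
    have : {ω | ε ≤ |X n ω - τ|} = {ω | ε ^ 2 ≤ (X n ω - τ) ^ 2} := by
      ext ω
      simp only [Set.mem_ofPred_eq]
      rw [sq_le_sq, abs_of_pos hε]
    rw [this]; exact h
  have := ENNReal.tendsto_ofReal hreal
  rw [ENNReal.ofReal_zero] at this
  refine this.congr fun n => ?_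
  exact ofReal_measureReal (measure_ne_top _ _)

end

end Con2

/-- For the Construction 2 graphs `G_n` built from a probability measure
`ν` on `[0,1]`, and every finite simple graph `F` on `{1,…,m}`,
`t(F, G_n) → t(F,W)` in probability, where `t(F,G) = n(F,G)/n^m` and
`t(F,W) = ∫_{S^m} ∏_{{i,j}∈E(F)} W(x_i,x_j) dμ_ν^m`. -/
theorem stmt11 (ν : Measure ℝ) [IsProbabilityMeasure ν] (hν : ν (Set.Icc 0 1) = 1)
    (m : ℕ) (F : SimpleGraph (Fin m)) [DecidableRel F.Adj] :
    ∀ ε > (0 : ℝ), Tendsto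
      (fun n => con2Measure n ν
        {ω | ε ≤ |(homCount F (con2Graph ω) : ℝ) / (n : ℝ) ^ m -
          ∫ x : Fin m → ℝ × ℝ, edgeProd F Wker x ∂(Measure.pi fun _ : Fin m => muNu ν)|})
      atTop (nhds 0) := by
  classical
  intro ε hε
  have hν' : ∀ᵐ x ∂ν, x ∈ Set.Icc (0:ℝ) 1 := by
    rw [← prob_compl_eq_zero_iff measurableSet_Icc] at hν
    exact hν
  rw [← tendsto_add_atTop_iff_nat 1]
  let S := Finset.univ.filter (fun p : Fin m × Fin m => p.1 < p.2 ∧ F.Adj p.1 p.2)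
  let a : S → Fin m := fun e => e.1.1
  let b : S → Fin m := fun e => e.1.2
  have hS : ∀ e : S, e.1.1 < e.1.2 ∧ F.Adj e.1.1 e.1.2 := fun e => by
    have := e.2
    simpa only [S, Finset.mem_filter, Finset.mem_univ, true_and] using this
  have hab : ∀ e, a e ≠ b e := fun e => (hS e).1.ne
  have hinj : ∀ e e', s(a e, b e) = s(a e', b e') → e = e' := by
    intro e e' h
    rw [Sym2.eq_iff] at h
    rcases h with ⟨h1, h2⟩ | ⟨h1, h2⟩
    · exact Subtype.ext (Prod.ext h1 h2)
    · have h3 : a e < b e := (hS e).1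
      have h4 : a e' < b e' := (hS e').1
      rw [h1, h2] at h3
      exact absurd h3 (not_lt.2 h4.le)
  have key := Con2.conv a b ν hν' hab hinj ε hε
  have hd : Con2.dens a b ν =
      ∫ x : Fin m → ℝ × ℝ, edgeProd F Wker x ∂(Measure.pi fun _ : Fin m => muNu ν) := by
    unfold Con2.dens edgeProd
    congr 1
    funext x
    exact Finset.prod_coe_sort S (fun p => Wker (x p.1) (x p.2))
  have hc : ∀ (n : ℕ) (ω : (Fin n → ℝ) × (Fin n × Fin n → ℝ)),
      (homCount F (con2Graph ω) : ℝ) = ∑ φ : Fin m → Fin n, Con2.homI a b φ ω := by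
    intro n ω
    unfold homCount
    rw [Nat.card_eq_fintype_card, Fintype.card_subtype, Finset.card_filter]
    push_cast
    refine Finset.sum_congr rfl fun φ _ => ?_
    unfold Con2.homI Con2.adjI
    rw [Finset.prod_ite_zero]
    simp only [Finset.prod_const_one, Finset.mem_univ, true_imp_iff]
    refine if_congr ?_ rfl rfl
    constructor
    · intro h e; exact h _ _ (hS e).2
    · intro h i j hij
      rcases lt_or_gt_of_ne hij.ne with hl | hl
      · exact h ⟨(i, j), by simp [S, hl, hij]⟩
      · exact (h ⟨(j, i), by simp [S, hl, hij.symm]⟩).symm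
  rw [hd] at key
  simp only [Fintype.card_fin] at key
  simp only [hc]
  push_cast
  exact key
end
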